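/- arXiv:1310.7767 — 2 statements merged into one kernel-verified Lean document; each statement's English description precedes it below -/
import Mathlib

section
/- The set of eigenvalues of the imaginary cubic oscillator has no accumulation point in ℂ: for every λ₀ ∈ ℂ there exists r > 0 such that every eigenvalue λ with |λ − λ₀| < r satisfies λ = λ₀. (The spectrum of the imaginary cubic oscillator is discrete.) -/
open MeasureTheory

/-- `lam` is an eigenvalue of the imaginary cubic oscillator `H = p² + i x³`. -/
def IsEigenvalueICO (lam : ℂ) : Prop :=
  ∃ ψ : ℝ → ℂ, ψ ≠ 0 ∧ ContDiff ℝ 2 ψ ∧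
    Integrable (fun x : ℝ => ‖ψ x‖ ^ 2) ∧
    ∀ x : ℝ, -(deriv (deriv ψ) x) + Complex.I * (x : ℂ) ^ 3 * ψ x = lam * ψ x



structure Sol (lam : ℂ) (u v : ℝ → ℂ) : Prop where
  du : ∀ x : ℝ, HasDerivAt u (v x) x
  dv : ∀ x : ℝ, HasDerivAt v ((Complex.I * (x : ℂ) ^ 3 - lam) * u x) x

theorem mono_aux (f f' : ℝ → ℝ) (a b : ℝ) (hab : a ≤ b) (h : ∀ x, HasDerivAt f (f' x) x)
    (h0 : ∀ x, a ≤ x → x ≤ b → 0 ≤ f' x) : f a ≤ f b := by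
  have : MonotoneOn f (Set.Icc a b) := by
    apply monotoneOn_of_deriv_nonneg (convex_Icc a b)
    · exact fun x _ => (h x).continuousAt.continuousWithinAt
    · exact fun x _ => (h x).differentiableAt.differentiableWithinAt
    · intro x hx
      rw [interior_Icc] at hx
      rw [(h x).deriv]
      exact h0 x hx.1.le hx.2.le
  exact this ⟨le_rfl, hab⟩ ⟨hab, le_rfl⟩ hab

theorem hasDerivAt_re {f : ℝ → ℂ} {f' : ℂ} {x : ℝ} (h : HasDerivAt f f' x) :
    HasDerivAt (fun t => (f t).re) f'.re x :=
  (Complex.reCLM.hasFDerivAt.comp_hasDerivAt x h)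

theorem hasDerivAt_im {f : ℝ → ℂ} {f' : ℂ} {x : ℝ} (h : HasDerivAt f f' x) :
    HasDerivAt (fun t => (f t).im) f'.im x :=
  (Complex.imCLM.hasFDerivAt.comp_hasDerivAt x h)

theorem cube_re (x : ℝ) : ((x : ℂ) ^ 3).re = x ^ 3 := by
  rw [← Complex.ofReal_pow, Complex.ofReal_re]
theorem cube_im (x : ℝ) : ((x : ℂ) ^ 3).im = 0 := by
  rw [← Complex.ofReal_pow, Complex.ofReal_im]

def KK (u v : ℂ) : ℝ := v.re * u.re + v.im * u.im
def JJ (u v : ℂ) : ℝ := v.im * u.re - v.re * u.im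
def GG (u v : ℂ) : ℝ := KK u v + JJ u v
def nn (u : ℂ) : ℝ := u.re ^ 2 + u.im ^ 2

theorem Sol.dK {lam : ℂ} {u v : ℝ → ℂ} (h : Sol lam u v) (x : ℝ) :
    HasDerivAt (fun t => KK (u t) (v t)) (nn (v x) - lam.re * nn (u x)) x := by
  have h1 := hasDerivAt_re (h.du x)
  have h2 := hasDerivAt_im (h.du x)
  have h3 := hasDerivAt_re (h.dv x)
  have h4 := hasDerivAt_im (h.dv x)
  refine ((h3.mul h1).add (h4.mul h2)).congr_deriv ?_
  simp only [Complex.mul_re, Complex.mul_im, Complex.sub_re, Complex.sub_im, Complex.I_re,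
    Complex.I_im, cube_re, cube_im, nn]
  ring

theorem Sol.dJ {lam : ℂ} {u v : ℝ → ℂ} (h : Sol lam u v) (x : ℝ) :
    HasDerivAt (fun t => JJ (u t) (v t)) ((x ^ 3 - lam.im) * nn (u x)) x := by
  have h1 := hasDerivAt_re (h.du x)
  have h2 := hasDerivAt_im (h.du x)
  have h3 := hasDerivAt_re (h.dv x)
  have h4 := hasDerivAt_im (h.dv x)
  refine ((h4.mul h1).sub (h3.mul h2)).congr_deriv ?_
  simp only [Complex.mul_re, Complex.mul_im, Complex.sub_re, Complex.sub_im, Complex.I_re,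
    Complex.I_im, cube_re, cube_im, nn]
  ring

theorem Sol.dG {lam : ℂ} {u v : ℝ → ℂ} (h : Sol lam u v) (x : ℝ) :
    HasDerivAt (fun t => GG (u t) (v t))
      (nn (v x) + (x ^ 3 - lam.im - lam.re) * nn (u x)) x := by
  refine ((h.dK x).add (h.dJ x)).congr_deriv ?_
  ring

theorem Sol.dn {lam : ℂ} {u v : ℝ → ℂ} (h : Sol lam u v) (x : ℝ) :
    HasDerivAt (fun t => nn (u t)) (2 * KK (u x) (v x)) x := by
  have h1 := hasDerivAt_re (h.du x)
  have h2 := hasDerivAt_im (h.du x)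
  refine ((h1.pow 2).add (h2.pow 2)).congr_deriv ?_
  simp only [KK]; push_cast; ring

theorem nn_nonneg (z : ℂ) : 0 ≤ nn z := by unfold nn; positivity

theorem nn_eq (z : ℂ) : nn z = ‖z‖ ^ 2 := by
  rw [← Complex.normSq_eq_norm_sq, Complex.normSq_apply, nn]; ring

theorem Sol.comb {lam : ℂ} {u v u' v' : ℝ → ℂ} (h : Sol lam u v) (h' : Sol lam u' v') (k l : ℂ) :
    Sol lam (fun x => k * u x + l * u' x) (fun x => k * v x + l * v' x) := by
  constructor
  · intro x
    exact ((h.du x).const_mul k).add ((h'.du x).const_mul l)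
  · intro x
    refine (((h.dv x).const_mul k).add ((h'.dv x).const_mul l)).congr_deriv ?_
    ring

theorem GG_le (u v : ℂ) : GG u v ≤ nn u + nn v := by
  unfold GG KK JJ nn
  nlinarith [sq_nonneg (v.re - (u.re - u.im)), sq_nonneg (v.im - (u.re + u.im))]

theorem neg_GG_le (u v : ℂ) : - GG u v ≤ nn u + nn v := by
  unfold GG KK JJ nn
  nlinarith [sq_nonneg (v.re + (u.re - u.im)), sq_nonneg (v.im + (u.re + u.im))]

/-- the potential is strong beyond `a` -/
def Good (lam : ℂ) (a : ℝ) : Prop := ∀ x, a ≤ x → 1 ≤ x ^ 3 - lam.im - lam.re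

theorem Sol.G_mono {lam : ℂ} {u v : ℝ → ℂ} (h : Sol lam u v) {a x y : ℝ} (hg : Good lam a)
    (hx : a ≤ x) (hy : x ≤ y) : GG (u x) (v x) ≤ GG (u y) (v y) := by
  refine mono_aux (fun t => GG (u t) (v t)) _ x y hy h.dG ?_
  intro t h1 _
  have := hg t (hx.trans h1)
  nlinarith [nn_nonneg (u t), nn_nonneg (v t)]

theorem Sol.G_exp {lam : ℂ} {u v : ℝ → ℂ} (h : Sol lam u v) {a x y : ℝ} (hg : Good lam a)
    (hx : a ≤ x) (hy : x ≤ y) : GG (u x) (v x) * Real.exp (y - x) ≤ GG (u y) (v y) := by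
  have hd : ∀ t, HasDerivAt (fun t => GG (u t) (v t) * Real.exp (-t)) _ t :=
    fun t => (h.dG t).mul ((Real.hasDerivAt_exp (-t)).comp t (hasDerivAt_neg t))
  have := mono_aux _ _ x y hy hd ?_
  · have e1 : Real.exp (y - x) = Real.exp (-x) * Real.exp y := by
      rw [← Real.exp_add]; congr 1; ring
    have e2 : Real.exp (-y) * Real.exp y = 1 := by rw [← Real.exp_add]; simp
    calc _ = (GG (u x) (v x) * Real.exp (-x)) * Real.exp y := by rw [e1]; ring
      _ ≤ (GG (u y) (v y) * Real.exp (-y)) * Real.exp y := by gcongr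
      _ = _ := by rw [mul_assoc, e2, mul_one]
  · intro t h1 _
    have h2 := hg t (hx.trans h1)
    have h3 := GG_le (u t) (v t)
    have h4 := Real.exp_pos (-t)
    have h5 := nn_nonneg (u t)
    have : 0 ≤ (nn (v t) + (t ^ 3 - lam.im - lam.re) * nn (u t) - GG (u t) (v t)) := by
      nlinarith
    nlinarith [mul_nonneg this h4.le]

theorem Sol.de {lam : ℂ} {u v : ℝ → ℂ} (h : Sol lam u v) (x : ℝ) :
    HasDerivAt (fun t => nn (u t) + nn (v t))
      (2 * KK (u x) (v x) + 2 * KK (v x) ((Complex.I * (x : ℂ) ^ 3 - lam) * u x)) x := by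
  have h1 := hasDerivAt_re (h.dv x)
  have h2 := hasDerivAt_im (h.dv x)
  refine ((h.dn x).add ((h1.pow 2).add (h2.pow 2))).congr_deriv ?_
  simp only [KK]; push_cast; ring

theorem KK_lower (u v : ℂ) : - (‖u‖ * ‖v‖) ≤ KK u v := by
  have h : KK u v = (v * (starRingEnd ℂ) u).re := by
    simp [KK]
  have h2 := Complex.abs_re_le_norm (v * (starRingEnd ℂ) u)
  rw [norm_mul, RCLike.norm_conj] at h2
  rw [h]
  nlinarith [neg_abs_le (v * (starRingEnd ℂ) u).re]

theorem Sol.e_lower {lam : ℂ} {u v : ℝ → ℂ} (h : Sol lam u v) {a x L : ℝ}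
    (hL : ∀ t, a ≤ t → t ≤ a + 1 → 1 + ‖Complex.I * (t : ℂ) ^ 3 - lam‖ ≤ L)
    (hx : a ≤ x) (hy : x ≤ a + 1) :
    (nn (u a) + nn (v a)) * Real.exp (-L) ≤ nn (u x) + nn (v x) := by
  have hd : ∀ t, HasDerivAt (fun t => (nn (u t) + nn (v t)) * Real.exp (L * t)) _ t :=
    fun t => (h.de t).mul ((Real.hasDerivAt_exp (L * t)).comp t ((hasDerivAt_id t).const_mul L))
  have hL0 : 0 ≤ L := by
    have := hL a le_rfl (by linarith)
    have := norm_nonneg (Complex.I * (a : ℂ) ^ 3 - lam)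
    linarith
  have := mono_aux _ _ a x hx hd ?_
  · have hp := add_nonneg (nn_nonneg (u a)) (nn_nonneg (v a))
    have e1 : Real.exp (-L) ≤ Real.exp (L * a) * Real.exp (-(L * x)) := by
      rw [← Real.exp_add]; apply Real.exp_le_exp.2; nlinarith
    have e2 : Real.exp (L * x) * Real.exp (-(L * x)) = 1 := by rw [← Real.exp_add]; simp
    calc _ ≤ (nn (u a) + nn (v a)) * (Real.exp (L * a) * Real.exp (-(L * x))) := by gcongr
      _ = ((nn (u a) + nn (v a)) * Real.exp (L * a)) * Real.exp (-(L * x)) := by ring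
      _ ≤ ((nn (u x) + nn (v x)) * Real.exp (L * x)) * Real.exp (-(L * x)) := by gcongr
      _ = _ := by rw [mul_assoc, e2, mul_one]
  · intro t h1 h2
    have h3 := hL t h1 (h2.trans hy)
    set q := Complex.I * (t : ℂ) ^ 3 - lam
    have h4 := KK_lower (u t) (v t)
    have h5 := KK_lower (v t) (q * u t)
    rw [norm_mul] at h5
    have h6 := Real.exp_pos (L * t)
    have : 0 ≤ 2 * KK (u t) (v t) + 2 * KK (v t) (q * u t) + L * (nn (u t) + nn (v t)) := by
      rw [nn_eq, nn_eq]
      have h7 : 0 ≤ ‖u t‖ * ‖v t‖ := by positivity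
      have h8 := mul_le_mul_of_nonneg_right h3 h7
      nlinarith [mul_nonneg hL0 (sq_nonneg (‖u t‖ - ‖v t‖))]
    simp only [mul_one]
    nlinarith [mul_nonneg this h6.le]

theorem Sol.G_gap {lam : ℂ} {u v : ℝ → ℂ} (h : Sol lam u v) {a x L : ℝ} (hg : Good lam a)
    (hL : ∀ t, a ≤ t → t ≤ a + 1 → 1 + ‖Complex.I * (t : ℂ) ^ 3 - lam‖ ≤ L) (hx : a + 1 ≤ x) :
    GG (u a) (v a) + (nn (u a) + nn (v a)) * Real.exp (-L) ≤ GG (u x) (v x) := by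
  refine le_trans ?_ (h.G_mono hg (by linarith) hx)
  have hd : ∀ t, HasDerivAt (fun t => GG (u t) (v t) -
      ((nn (u a) + nn (v a)) * Real.exp (-L)) * t) _ t :=
    fun t => (h.dG t).sub ((hasDerivAt_id t).const_mul _)
  have := mono_aux _ _ a (a + 1) (by linarith) hd ?_
  · linarith
  · intro t h1 h2
    have h3 := h.e_lower hL h1 h2
    have h4 := hg t h1
    simp only [mul_one]
    nlinarith [nn_nonneg (u t), nn_nonneg (v t)]

theorem nn_sub_le (p q : ℂ) : nn (p - q) ≤ 2 * nn p + 2 * nn q := by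
  simp only [nn, Complex.sub_re, Complex.sub_im]
  nlinarith [sq_nonneg (p.re + q.re), sq_nonneg (p.im + q.im)]

theorem Sol.sub {lam : ℂ} {u v u' v' : ℝ → ℂ} (h : Sol lam u v) (h' : Sol lam u' v') :
    Sol lam (fun x => u x - u' x) (fun x => v x - v' x) := by
  constructor
  · intro x
    exact (h.du x).sub (h'.du x)
  · intro x
    refine ((h.dv x).sub (h'.dv x)).congr_deriv ?_
    ring

theorem Sol.G_sub {lam : ℂ} {u v u' v' : ℝ → ℂ} (h : Sol lam u v) (h' : Sol lam u' v')
    {a x : ℝ} (hg : Good lam a) (hx : a ≤ x) :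
    GG (u x - u' x) (v x - v' x) - 2 * GG (u x) (v x) - 2 * GG (u' x) (v' x) ≤
    GG (u a - u' a) (v a - v' a) - 2 * GG (u a) (v a) - 2 * GG (u' a) (v' a) := by
  have hd : ∀ t, HasDerivAt (fun t => 2 * GG (u t) (v t) + 2 * GG (u' t) (v' t) -
      GG (u t - u' t) (v t - v' t)) _ t :=
    fun t => (((h.dG t).const_mul 2).add ((h'.dG t).const_mul 2)).sub ((h.sub h').dG t)
  have := mono_aux _ _ a x hx hd ?_
  · linarith
  · intro t h1 _
    have h4 := hg t h1
    have h5 := nn_sub_le (u t) (u' t)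
    have h6 := nn_sub_le (v t) (v' t)
    nlinarith

theorem GG_smul (k u v : ℂ) : GG (k * u) (k * v) = nn k * GG u v := by
  simp only [GG, KK, JJ, nn, Complex.mul_re, Complex.mul_im]; ring

/-! power series -/
def Ent (c : ℕ → ℂ) : Prop := ∀ r : ℝ, 1 ≤ r → ∃ M : ℝ, ∀ n, ‖c n‖ * r ^ n ≤ M

theorem Ent.deriv {c : ℕ → ℂ} (h : Ent c) : Ent (fun n => ((n : ℂ) + 1) * c (n + 1)) := by
  intro r hr
  obtain ⟨M, hM⟩ := h (2 * r) (by linarith)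
  refine ⟨M, fun n => le_trans ?_ (hM (n + 1))⟩
  have h1 : ‖(n : ℂ) + 1‖ = (n : ℝ) + 1 := by
    have : (n : ℂ) + 1 = ((n + 1 : ℕ) : ℂ) := by push_cast; ring
    rw [this, Complex.norm_natCast]; push_cast; ring
  rw [norm_mul, h1]
  have h2 : ((n : ℝ) + 1) ≤ 2 ^ (n + 1) := by
    exact_mod_cast (Nat.lt_two_pow_self (n := n + 1)).le
  have h3 : r ^ n ≤ r ^ (n + 1) := pow_le_pow_right₀ hr (Nat.le_succ n)
  calc ((n : ℝ) + 1) * ‖c (n + 1)‖ * r ^ n ≤ 2 ^ (n + 1) * ‖c (n + 1)‖ * r ^ (n + 1) := by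
        gcongr
    _ = _ := by rw [mul_pow]; ring

theorem bound_aux {c : ℂ} {n : ℕ} {r M : ℝ} (h : ‖c‖ * (2 * r) ^ n ≤ M) {x : ℝ}
    (hx : |x| ≤ r) : ‖c * (x : ℂ) ^ n‖ ≤ M * (1 / 2) ^ n := by
  rw [norm_mul, norm_pow, Complex.norm_real, Real.norm_eq_abs]
  have h1 : |x| ^ n ≤ r ^ n := pow_le_pow_left₀ (abs_nonneg x) hx n
  calc ‖c‖ * |x| ^ n ≤ ‖c‖ * r ^ n := by gcongr
    _ = (‖c‖ * (2 * r) ^ n) * (1 / 2) ^ n := by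
        rw [mul_assoc, ← mul_pow]; congr 2; ring
    _ ≤ _ := by gcongr

theorem summable_half (M : ℝ) : Summable (fun n : ℕ => M * (1 / 2 : ℝ) ^ n) :=
  (summable_geometric_of_lt_one (by norm_num) (by norm_num)).mul_left M

theorem Ent.summable {c : ℕ → ℂ} (h : Ent c) (x : ℝ) : Summable (fun n => c n * (x : ℂ) ^ n) := by
  have hr : 1 ≤ 1 + |x| := by linarith [abs_nonneg x]
  obtain ⟨M, hM⟩ := h (2 * (1 + |x|)) (by linarith)
  exact Summable.of_norm_bounded (summable_half M)
    (fun n => bound_aux (r := 1 + |x|) (hM n) (by linarith))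

theorem Ent.hasDerivAt {c : ℕ → ℂ} (h : Ent c) (x : ℝ) :
    HasDerivAt (fun x : ℝ => ∑' n, c n * (x : ℂ) ^ n)
      (∑' n : ℕ, (((n : ℂ) + 1) * c (n + 1)) * (x : ℂ) ^ n) x := by
  set r := 1 + |x| with hrdef
  have hr : 1 ≤ r := by linarith [abs_nonneg x]
  obtain ⟨M, hM⟩ := h.deriv (2 * r) (by linarith)
  have hM0 : 0 ≤ M := le_trans (by positivity) (hM 0)
  have key := hasDerivAt_tsum_of_isPreconnected (𝕜 := ℝ) (F := ℂ)
    (g := fun (n : ℕ) (y : ℝ) => c n * (y : ℂ) ^ n)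
    (g' := fun (n : ℕ) (y : ℝ) => c n * ((n : ℂ) * (y : ℂ) ^ (n - 1)))
    (u := fun n => M * (1 / 2 : ℝ) ^ (n - 1)) (t := Metric.ball (0 : ℝ) r) (y₀ := 0) (y := x)
    ?_ Metric.isOpen_ball (convex_ball _ _).isPreconnected ?_ ?_ ?_ ?_ ?_
  · refine key.congr_deriv ?_
    have hs : Summable (fun n : ℕ => c n * ((n : ℂ) * (x : ℂ) ^ (n - 1))) := by
      rw [← summable_nat_add_iff 1]
      refine (h.deriv.summable x).congr (fun n => ?_)
      simp only [Nat.add_sub_cancel]; push_cast; ring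
    rw [hs.tsum_eq_zero_add]
    simp only [Nat.cast_zero, zero_mul, mul_zero, zero_add]
    apply tsum_congr
    intro n
    simp only [Nat.add_sub_cancel]; push_cast; ring
  · rw [← summable_nat_add_iff 1]
    simpa using summable_half M
  · intro n y _
    refine HasDerivAt.const_mul _ ?_
    have := (hasDerivAt_pow n (y : ℂ)).comp_ofReal
    simpa using this
  · intro n y hy
    rcases n with _ | n
    · simp; positivity
    · have hy' : |y| ≤ r := by
        rw [Metric.mem_ball, dist_zero_right] at hy; exact hy.le
      have := bound_aux (hM n) hy'
      simp only [Nat.add_sub_cancel]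
      refine le_trans (le_of_eq ?_) this
      congr 1; push_cast; ring
  · simp; linarith
  · exact h.summable 0
  · simp [hrdef]

noncomputable def coef (A B lam : ℂ) : ℕ → ℂ
  | 0 => A
  | 1 => B
  | 2 => -lam * A / 2
  | 3 => -lam * B / 6
  | 4 => -lam * coef A B lam 2 / 12
  | (n + 5) => (Complex.I * coef A B lam n - lam * coef A B lam (n + 3)) /
      (((n : ℂ) + 5) * ((n : ℂ) + 4))

theorem coef_diff (A B : ℂ) : ∀ n, Differentiable ℂ (fun lam => coef A B lam n) := by
  intro n
  induction n using Nat.strong_induction_on with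
  | _ n ih =>
    match n, ih with
    | 0, _ => simp only [coef]; fun_prop
    | 1, _ => simp only [coef]; fun_prop
    | 2, _ => simp only [coef]; fun_prop
    | 3, _ => simp only [coef]; fun_prop
    | 4, _ => simp only [coef]; fun_prop
    | n + 5, ih =>
      have h1 := ih n (by omega)
      have h2 := ih (n + 3) (by omega)
      simp only [coef]
      fun_prop

theorem coef_step (A B lam : ℂ) {R r : ℝ} (hr : 1 ≤ r) (hl : ‖lam‖ ≤ R) (n : ℕ) :
    ‖coef A B lam (n + 5)‖ * r ^ (n + 5) * ((n : ℝ) + 1) ≤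
      r ^ 5 * (‖coef A B lam n‖ * r ^ n) + R * r ^ 2 * (‖coef A B lam (n + 3)‖ * r ^ (n + 3)) := by
  have hR : 0 ≤ R := (norm_nonneg _).trans hl
  have e : coef A B lam (n + 5) = (Complex.I * coef A B lam n - lam * coef A B lam (n + 3)) /
      (((n : ℂ) + 5) * ((n : ℂ) + 4)) := by simp only [coef]
  have h5 : ‖((n : ℂ) + 5) * ((n : ℂ) + 4)‖ = ((n : ℝ) + 5) * ((n : ℝ) + 4) := by
    have : ((n : ℂ) + 5) * ((n : ℂ) + 4) = (((n + 5) * (n + 4) : ℕ) : ℂ) := by push_cast; ring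
    rw [this, Complex.norm_natCast]; push_cast; ring
  have h6 : ‖coef A B lam (n + 5)‖ * (((n : ℝ) + 5) * ((n : ℝ) + 4)) =
      ‖Complex.I * coef A B lam n - lam * coef A B lam (n + 3)‖ := by
    rw [e, norm_div, h5]; field_simp
  have h7 : ‖Complex.I * coef A B lam n - lam * coef A B lam (n + 3)‖ ≤
      ‖coef A B lam n‖ + R * ‖coef A B lam (n + 3)‖ := by
    refine (norm_sub_le _ _).trans ?_
    rw [norm_mul, norm_mul, Complex.norm_I, one_mul]
    gcongr
  have h8 : (n : ℝ) + 1 ≤ ((n : ℝ) + 5) * ((n : ℝ) + 4) := by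
    have : (0 : ℝ) ≤ n := Nat.cast_nonneg n
    nlinarith
  calc ‖coef A B lam (n + 5)‖ * r ^ (n + 5) * ((n : ℝ) + 1)
      ≤ ‖coef A B lam (n + 5)‖ * r ^ (n + 5) * (((n : ℝ) + 5) * ((n : ℝ) + 4)) := by gcongr
    _ = (‖coef A B lam (n + 5)‖ * (((n : ℝ) + 5) * ((n : ℝ) + 4))) * r ^ (n + 5) := by ring
    _ ≤ (‖coef A B lam n‖ + R * ‖coef A B lam (n + 3)‖) * r ^ (n + 5) := by
        rw [h6]; gcongr
    _ = _ := by ring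

theorem coef_bound (A B : ℂ) {R r : ℝ} (hr : 1 ≤ r) (hR : 0 ≤ R) :
    ∃ M : ℝ, ∀ lam : ℂ, ‖lam‖ ≤ R → ∀ n, ‖coef A B lam n‖ * r ^ n ≤ M := by
  set T := r ^ 5 + R * r ^ 2 with hT
  have hT0 : 0 ≤ T := by positivity
  set K := 1 + T with hK
  have hK1 : 1 ≤ K := by linarith
  -- uniform bound of finitely many coefficients
  have hfin : ∀ N : ℕ, ∃ M : ℝ, ∀ lam : ℂ, ‖lam‖ ≤ R → ∀ n, n < N →
      ‖coef A B lam n‖ * r ^ n ≤ M := by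
    intro N
    induction N with
    | zero => exact ⟨0, fun _ _ n hn => absurd hn (Nat.not_lt_zero n)⟩
    | succ N ih =>
      obtain ⟨M, hM⟩ := ih
      obtain ⟨M', hM'⟩ := (isCompact_closedBall (0 : ℂ) R).exists_bound_of_continuousOn
        (coef_diff A B N).continuous.continuousOn
      refine ⟨max M (M' * r ^ N), fun lam hl n hn => ?_⟩
      rcases Nat.lt_succ_iff_lt_or_eq.1 hn with h | h
      · exact (hM lam hl n h).trans (le_max_left _ _)
      · subst h
        refine le_trans ?_ (le_max_right _ _)
        have := hM' lam (by simpa using hl)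
        gcongr
  obtain ⟨N, hN⟩ := exists_nat_ge T
  obtain ⟨M, hM⟩ := hfin (N + 5)
  refine ⟨M, fun lam hl n => ?_⟩
  induction n using Nat.strong_induction_on with
  | _ n ih =>
    by_cases hn : n < N + 5
    · exact hM lam hl n hn
    · obtain ⟨k, rfl⟩ : ∃ k, n = k + 5 := ⟨n - 5, by omega⟩
      have h1 := ih k (by omega)
      have h2 := ih (k + 3) (by omega)
      have h3 := coef_step A B lam hr hl k
      have hk : (N : ℝ) ≤ k := by exact_mod_cast (by omega : N ≤ k)
      have hM0 : 0 ≤ M := le_trans (by positivity) h1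
      have h4 : ‖coef A B lam (k + 5)‖ * r ^ (k + 5) * ((k : ℝ) + 1) ≤ M * ((k : ℝ) + 1) := by
        refine h3.trans ?_
        calc _ ≤ r ^ 5 * M + R * r ^ 2 * M := by gcongr
          _ = M * T := by rw [hT]; ring
          _ ≤ _ := by gcongr; linarith
      exact le_of_mul_le_mul_right h4 (by positivity)

theorem coef_ent (A B lam : ℂ) : Ent (coef A B lam) := by
  intro r hr
  obtain ⟨M, hM⟩ := coef_bound A B hr (norm_nonneg lam)
  exact ⟨M, hM lam le_rfl⟩

theorem exists_sol (A B : ℂ) : ∃ u v : ℂ → ℝ → ℂ, (∀ lam, Sol lam (u lam) (v lam)) ∧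
    (∀ lam, u lam 0 = A ∧ v lam 0 = B) ∧
    (∀ x, Differentiable ℂ (fun lam => u lam x)) ∧ (∀ x, Differentiable ℂ (fun lam => v lam x)) := by
  refine ⟨fun lam x => ∑' n, coef A B lam n * (x : ℂ) ^ n,
    fun lam x => ∑' n : ℕ, (((n : ℂ) + 1) * coef A B lam (n + 1)) * (x : ℂ) ^ n, ?_, ?_, ?_, ?_⟩
  · intro lam
    have hE := coef_ent A B lam
    refine ⟨fun x => hE.hasDerivAt x, fun x => ?_⟩
    refine (hE.deriv.hasDerivAt x).congr_deriv ?_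
    have hS := hE.summable x
    have hS2 := hE.deriv.deriv.summable x
    rw [← hS2.sum_add_tsum_nat_add 3]
    have e1 : ∀ n : ℕ, (((n + 3 : ℕ) : ℂ) + 1) * ((((n + 3 + 1 : ℕ) : ℂ) + 1) *
        coef A B lam (n + 3 + 1 + 1)) * (x : ℂ) ^ (n + 3) =
        Complex.I * (x : ℂ) ^ 3 * (coef A B lam n * (x : ℂ) ^ n) -
          lam * (coef A B lam (n + 3) * (x : ℂ) ^ (n + 3)) := by
      intro n
      have e : coef A B lam (n + 5) = (Complex.I * coef A B lam n - lam * coef A B lam (n + 3)) /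
        (((n : ℂ) + 5) * ((n : ℂ) + 4)) := by simp only [coef]
      have h5 : (n : ℂ) + 5 ≠ 0 := by exact_mod_cast (by omega : n + 5 ≠ 0)
      have h4 : (n : ℂ) + 4 ≠ 0 := by exact_mod_cast (by omega : n + 4 ≠ 0)
      rw [show n + 3 + 1 + 1 = n + 5 from rfl, e]
      push_cast
      field_simp
      ring
    rw [tsum_congr e1]
    have hS3 := (summable_nat_add_iff 3).2 hS
    rw [(hS.mul_left _).tsum_sub (hS3.mul_left _), tsum_mul_left, tsum_mul_left, sub_mul]
    beta_reduce
    have hsplit := hS.sum_add_tsum_nat_add 3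
    simp only [Finset.sum_range_succ, Finset.sum_range_zero, coef] at hsplit ⊢
    push_cast
    linear_combination (-lam) * hsplit
  · intro lam
    constructor
    · beta_reduce
      rw [tsum_eq_single 0]
      · simp [coef]
      · intro n hn; simp [hn]
    · beta_reduce
      rw [tsum_eq_single 0]
      · simp [coef]
      · intro n hn; simp [hn]
  · intro x lam0
    have hr : 1 ≤ 1 + |x| := by linarith [abs_nonneg x]
    obtain ⟨M, hM⟩ := coef_bound A B (R := ‖lam0‖ + 1) (r := 2 * (1 + |x|)) (by linarith)
      (by positivity)
    have := Complex.differentiableOn_tsum_of_summable_norm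
      (F := fun (n : ℕ) (lam : ℂ) => coef A B lam n * (x : ℂ) ^ n)
      (U := Metric.ball (0 : ℂ) (‖lam0‖ + 1)) (summable_half M)
      (fun n => ((coef_diff A B n).mul_const _).differentiableOn) Metric.isOpen_ball
      (fun n w hw => bound_aux (r := 1 + |x|) (hM w (by simpa using (mem_ball_zero_iff.1 hw).le) n) (by linarith))
    exact this.differentiableAt (Metric.isOpen_ball.mem_nhds (by simp))
  · intro x lam0
    have hr : 1 ≤ 1 + |x| := by linarith [abs_nonneg x]
    obtain ⟨M, hM⟩ := coef_bound A B (R := ‖lam0‖ + 1) (r := 2 * (2 * (1 + |x|))) (by linarith)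
      (by positivity)
    have := Complex.differentiableOn_tsum_of_summable_norm
      (F := fun (n : ℕ) (lam : ℂ) => (((n : ℂ) + 1) * coef A B lam (n + 1)) * (x : ℂ) ^ n)
      (U := Metric.ball (0 : ℂ) (‖lam0‖ + 1)) (summable_half M)
      (fun n => (((coef_diff A B (n + 1)).const_mul _).mul_const _).differentiableOn)
      Metric.isOpen_ball
      (fun n w hw => bound_aux (r := 1 + |x|) ?_ (by linarith))
    · exact this.differentiableAt (Metric.isOpen_ball.mem_nhds (by simp))
    · have h := hM w (by simpa using (mem_ball_zero_iff.1 hw).le) (n + 1)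
      have h1 : ‖(n : ℂ) + 1‖ = (n : ℝ) + 1 := by
        have : (n : ℂ) + 1 = ((n + 1 : ℕ) : ℂ) := by push_cast; ring
        rw [this, Complex.norm_natCast]; push_cast; ring
      rw [norm_mul, h1]
      have h2 : ((n : ℝ) + 1) ≤ 2 ^ (n + 1) := by
        exact_mod_cast (Nat.lt_two_pow_self (n := n + 1)).le
      set ρ := 2 * (1 + |x|)
      have hρ : 1 ≤ ρ := by simp only [ρ]; linarith
      have h3 : ρ ^ n ≤ ρ ^ (n + 1) := pow_le_pow_right₀ hρ (Nat.le_succ n)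
      refine le_trans ?_ h
      calc _ ≤ 2 ^ (n + 1) * ‖coef A B w (n + 1)‖ * ρ ^ (n + 1) := by gcongr
        _ = _ := by rw [mul_pow 2 ρ]; ring

section
open Filter Topology

theorem Sol.wronskian {lam : ℂ} {u v u' v' : ℝ → ℂ} (h : Sol lam u v) (h' : Sol lam u' v')
    (x y : ℝ) : u x * v' x - v x * u' x = u y * v' y - v y * u' y := by
  have hd : ∀ t, HasDerivAt (fun t => u t * v' t - v t * u' t) 0 t := by
    intro t
    refine (((h.du t).mul (h'.dv t)).sub ((h.dv t).mul (h'.du t))).congr_deriv ?_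
    ring
  exact is_const_of_deriv_eq_zero (fun t => (hd t).differentiableAt) (fun t => (hd t).deriv) x y

theorem exists_base (a : ℝ) : ∃ c c' s s' : ℂ → ℝ → ℂ,
    (∀ lam, Sol lam (c lam) (c' lam)) ∧ (∀ lam, Sol lam (s lam) (s' lam)) ∧
    (∀ lam, c lam a = 1 ∧ c' lam a = 0 ∧ s lam a = 0 ∧ s' lam a = 1) ∧
    (∀ x, Differentiable ℂ (fun lam => c lam x)) ∧ (∀ x, Differentiable ℂ (fun lam => c' lam x)) ∧
    (∀ x, Differentiable ℂ (fun lam => s lam x)) ∧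
    (∀ x, Differentiable ℂ (fun lam => s' lam x)) := by
  obtain ⟨C, C', hC, hC0, hCd, hCd'⟩ := exists_sol 1 0
  obtain ⟨S, S', hS, hS0, hSd, hSd'⟩ := exists_sol 0 1
  have hW : ∀ lam, C lam a * S' lam a - C' lam a * S lam a = 1 := by
    intro lam
    rw [(hC lam).wronskian (hS lam) a 0, (hC0 lam).1, (hC0 lam).2, (hS0 lam).1, (hS0 lam).2]
    ring
  refine ⟨fun lam x => S' lam a * C lam x + (-C' lam a) * S lam x,
    fun lam x => S' lam a * C' lam x + (-C' lam a) * S' lam x,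
    fun lam x => (- S lam a) * C lam x + C lam a * S lam x,
    fun lam x => (- S lam a) * C' lam x + C lam a * S' lam x,
    fun lam => (hC lam).comb (hS lam) _ _, fun lam => (hC lam).comb (hS lam) _ _, ?_, ?_, ?_, ?_, ?_⟩
  · intro lam
    have := hW lam
    refine ⟨?_, ?_, ?_, ?_⟩
    · linear_combination this
    · ring
    · ring
    · linear_combination this
  · exact fun x => ((hSd' a).mul (hCd x)).add ((hCd' a).neg.mul (hSd x))
  · exact fun x => ((hSd' a).mul (hCd' x)).add ((hCd' a).neg.mul (hSd' x))
  · exact fun x => ((hSd a).neg.mul (hCd x)).add ((hCd a).mul (hSd x))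
  · exact fun x => ((hSd a).neg.mul (hCd' x)).add ((hCd a).mul (hSd' x))

theorem weyl_bound {k m : ℝ} (hk : 0 < k) (h : (1 + m ^ 2) * k ≤ 2 * m) (hm : 0 ≤ m) : m ≤ 2 / k := by
  rw [le_div_iff₀ hk]
  by_contra hc
  push Not at hc
  have : 0 < m := by
    rcases hm.eq_or_lt with h0 | h0
    · rw [← h0] at hc; linarith
    · exact h0
  nlinarith

theorem GG_one_abs (m : ℂ) : |GG 1 m| ≤ 2 * ‖m‖ := by
  have h1 := Complex.abs_re_le_norm m
  have h2 := Complex.abs_im_le_norm m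
  have : GG 1 m = m.re + m.im := by simp [GG, KK, JJ]
  rw [this]
  exact (abs_add_le _ _).trans (by linarith)

theorem GG_zero_left (v : ℂ) : GG 0 v = 0 := by simp [GG, KK, JJ]

/-- The Weyl limit point construction. -/
theorem weyl {R a L : ℝ} {c c' s s' : ℂ → ℝ → ℂ}
    (hg : ∀ lam ∈ Metric.ball (0 : ℂ) R, Good lam a)
    (hL : ∀ lam ∈ Metric.ball (0 : ℂ) R, ∀ t : ℝ, a ≤ t → t ≤ a + 1 →
      1 + ‖Complex.I * (t : ℂ) ^ 3 - lam‖ ≤ L)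
    (hc : ∀ lam, Sol lam (c lam) (c' lam)) (hs : ∀ lam, Sol lam (s lam) (s' lam))
    (h0 : ∀ lam, c lam a = 1 ∧ c' lam a = 0 ∧ s lam a = 0 ∧ s' lam a = 1)
    (dc : ∀ x, Differentiable ℂ (fun lam => c lam x))
    (ds : ∀ x, Differentiable ℂ (fun lam => s lam x)) :
    ∃ m : ℂ → ℂ, DifferentiableOn ℂ m (Metric.ball (0 : ℂ) R) ∧
      ∀ lam ∈ Metric.ball (0 : ℂ) R, ∀ x, a ≤ x →
        GG (c lam x + m lam * s lam x) (c' lam x + m lam * s' lam x) ≤ 0 := by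
  set U := Metric.ball (0 : ℂ) R with hU
  set k := Real.exp (-L) with hk
  have hk0 : 0 < k := Real.exp_pos _
  set X : ℕ → ℝ := fun n => a + 1 + n with hX
  have hXa : ∀ n, a + 1 ≤ X n := fun n => by simp [hX]
  have hGs1 : ∀ lam ∈ U, k ≤ GG (s lam (a + 1)) (s' lam (a + 1)) := by
    intro lam hl
    have := (hs lam).G_gap (hg lam hl) (hL lam hl) (le_refl (a + 1))
    rw [(h0 lam).2.2.1, (h0 lam).2.2.2, GG_zero_left] at this
    simpa [nn] using this
  have hGs : ∀ lam ∈ U, ∀ n : ℕ, k * Real.exp n ≤ GG (s lam (X n)) (s' lam (X n)) := by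
    intro lam hl n
    have := (hs lam).G_exp (hg lam hl) (by linarith) (hXa n)
    rw [show X n - (a + 1) = n by simp [hX]] at this
    refine le_trans ?_ this
    have := hGs1 lam hl
    gcongr
  have hsne : ∀ lam ∈ U, ∀ n, s lam (X n) ≠ 0 := by
    intro lam hl n h
    have := hGs lam hl n
    rw [h, GG_zero_left] at this
    have : 0 < k * Real.exp n := by positivity
    linarith
  set m : ℕ → ℂ → ℂ := fun n lam => - c lam (X n) / s lam (X n) with hm
  have hmd : ∀ n, DifferentiableOn ℂ (m n) U := by
    intro n
    exact DifferentiableOn.div (dc (X n)).neg.differentiableOn (ds (X n)).differentiableOn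
      (fun lam hl => hsne lam hl n)
  -- the approximating solutions
  have hsol : ∀ z lam, Sol lam (fun x => c lam x + z * s lam x) (fun x => c' lam x + z * s' lam x) := by
    intro z lam
    simpa using (hc lam).comb (hs lam) 1 z
  have hend : ∀ lam ∈ U, ∀ n, c lam (X n) + m n lam * s lam (X n) = 0 := by
    intro lam hl n
    have := hsne lam hl n
    simp only [hm]
    field_simp
    ring
  have hGle : ∀ lam ∈ U, ∀ n x, a ≤ x → x ≤ X n →
      GG (c lam x + m n lam * s lam x) (c' lam x + m n lam * s' lam x) ≤ 0 := by
    intro lam hl n x h1 h2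
    have := (hsol (m n lam) lam).G_mono (hg lam hl) h1 h2
    rw [hend lam hl n, GG_zero_left] at this
    exact this
  have hmb : ∀ lam ∈ U, ∀ n, ‖m n lam‖ ≤ 2 / k := by
    intro lam hl n
    have := (hsol (m n lam) lam).G_gap (hg lam hl) (hL lam hl) (hXa n)
    rw [hend lam hl n, GG_zero_left, (h0 lam).1, (h0 lam).2.1, (h0 lam).2.2.1, (h0 lam).2.2.2] at this
    simp only [mul_zero, add_zero, zero_add, mul_one] at this
    have h1 := (neg_le_abs _).trans (GG_one_abs (m n lam))
    have h2 : nn 1 = 1 := by simp [nn]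
    rw [h2, nn_eq] at this
    exact weyl_bound hk0 (by linarith) (norm_nonneg _)
  have hdiff : ∀ lam ∈ U, ∀ n p : ℕ, n ≤ p → nn (m p lam - m n lam) * (k * Real.exp n) ≤ 16 / k := by
    intro lam hl n p hnp
    have hXn : a ≤ X n := by linarith [hXa n]
    have hXX : X n ≤ X p := by simp only [hX]; gcongr
    have h1 := (hsol (m p lam) lam).G_sub (hsol (m n lam) lam) (hg lam hl) hXn
    have h2 := hGle lam hl p (X n) hXn hXX
    rw [hend lam hl n, GG_zero_left, (h0 lam).1, (h0 lam).2.1, (h0 lam).2.2.1, (h0 lam).2.2.2] at h1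
    simp only [mul_zero, add_zero, zero_add, mul_one, sub_self, GG_zero_left, sub_zero] at h1
    have h3 := (neg_le_abs _).trans (GG_one_abs (m n lam))
    have h4 := (neg_le_abs _).trans (GG_one_abs (m p lam))
    have h5 := hmb lam hl n
    have h6 := hmb lam hl p
    have h7 : GG (c lam (X n) + m p lam * s lam (X n))
        (c' lam (X n) + m p lam * s' lam (X n) - (c' lam (X n) + m n lam * s' lam (X n))) =
        nn (m p lam - m n lam) * GG (s lam (X n)) (s' lam (X n)) := by
      rw [← GG_smul]
      congr 1
      · linear_combination (hend lam hl n)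
      · ring
    rw [h7] at h1
    have h8 := hGs lam hl n
    have h9 : nn (m p lam - m n lam) * (k * Real.exp n) ≤
        nn (m p lam - m n lam) * GG (s lam (X n)) (s' lam (X n)) :=
      mul_le_mul_of_nonneg_left h8 (nn_nonneg _)
    have h10 : 16 / k = 8 * (2 / k) := by ring
    rw [h10]
    linarith
  have hcau : UniformCauchySeqOn m atTop U := by
    rw [Metric.uniformCauchySeqOn_iff]
    intro ε hε
    -- choose N with 16/k < ε^2 k exp N
    obtain ⟨N, hN⟩ := exists_nat_gt (16 / k / (ε ^ 2 * k))
    have hkey : ∀ n p, N ≤ n → n ≤ p → ∀ lam ∈ U, ‖m p lam - m n lam‖ < ε := by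
      intro n p hn hp lam hl
      have h1 := hdiff lam hl n p hp
      rw [nn_eq] at h1
      by_contra hcon
      push Not at hcon
      have h2 : ε ^ 2 ≤ ‖m p lam - m n lam‖ ^ 2 := by gcongr
      have h3 : (N : ℝ) ≤ Real.exp n := by
        have : (N : ℝ) ≤ n := by exact_mod_cast hn
        linarith [Real.add_one_le_exp (n : ℝ)]
      rw [div_lt_iff₀ (by positivity)] at hN
      have h4 : ε ^ 2 * (k * N) ≤ ‖m p lam - m n lam‖ ^ 2 * (k * Real.exp n) := by gcongr
      nlinarith
    refine ⟨N, fun p hp n hn lam hl => ?_⟩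
    rw [dist_eq_norm]
    rcases le_total n p with h | h
    · exact hkey n p hn h lam hl
    · rw [norm_sub_rev]; exact hkey p n hp h lam hl
  have hlim : ∀ lam, ∃ z, lam ∈ U → Tendsto (fun n => m n lam) atTop (𝓝 z) := by
    intro lam
    by_cases hl : lam ∈ U
    · obtain ⟨z, hz⟩ := cauchySeq_tendsto_of_complete (hcau.cauchySeq hl)
      exact ⟨z, fun _ => hz⟩
    · exact ⟨0, fun h => absurd h hl⟩
  choose M hM using hlim
  refine ⟨M, ?_, ?_⟩
  · exact (hcau.tendstoUniformlyOn_of_tendsto (fun lam hl => hM lam hl)).tendstoLocallyUniformlyOn.differentiableOn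
      (Eventually.of_forall hmd) Metric.isOpen_ball
  · intro lam hl x hx
    have hcont : Continuous (fun z : ℂ => GG (c lam x + z * s lam x) (c' lam x + z * s' lam x)) := by
      unfold GG KK JJ
      fun_prop
    refine le_of_tendsto ((hcont.tendsto _).comp (hM lam hl)) ?_
    obtain ⟨N, hN⟩ := exists_nat_ge x
    filter_upwards [eventually_ge_atTop (N + Nat.ceil |a|)] with n hn
    apply hGle lam hl n x hx
    simp only [hX]
    have h1 : ((N + Nat.ceil |a| : ℕ) : ℝ) ≤ n := by exact_mod_cast hn
    push_cast at h1
    linarith [Nat.le_ceil |a|, neg_abs_le a]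

end

theorem Sol.G_nonpos {lam : ℂ} {u v : ℝ → ℂ} (h : Sol lam u v) {a : ℝ} (hg : Good lam a)
    (hi : Integrable (fun x : ℝ => ‖u x‖ ^ 2)) {x0 : ℝ} (hx0 : a ≤ x0) :
    GG (u x0) (v x0) ≤ 0 := by
  by_contra hcon
  push Not at hcon
  set g := GG (u x0) (v x0) with hgdef
  set f : ℝ → ℝ := fun x => nn (u x) with hf
  have hi' : Integrable f := by
    refine hi.congr (Filter.Eventually.of_forall fun x => ?_)
    simp only [hf, nn_eq]
  have hfc : Continuous f := continuous_iff_continuousAt.2 fun x => (h.dn x).continuousAt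
  have hf0 : ∀ x, 0 ≤ f x := fun x => nn_nonneg _
  set F : ℝ → ℝ := fun x => ∫ t in x0..x, f t with hF
  have hFd : ∀ x, HasDerivAt F (f x) x := fun x =>
    intervalIntegral.integral_hasDerivAt_right (hfc.intervalIntegrable _ _)
      hfc.stronglyMeasurable.stronglyMeasurableAtFilter hfc.continuousAt
  set B := ∫ t, f t with hB
  have hFB : ∀ x, x0 ≤ x → F x ≤ B := by
    intro x hx
    simp only [hF]
    rw [intervalIntegral.integral_of_le hx]
    exact setIntegral_le_integral hi' (Filter.Eventually.of_forall hf0)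
  have hB0 : 0 ≤ B := integral_nonneg hf0
  have hF0 : F x0 = 0 := by simp [hF]
  set A := 1 + |lam.re| with hA
  have hA0 : 0 ≤ A := by positivity
  have hK : ∀ x, x0 ≤ x → KK (u x0) (v x0) + g * (x - x0) - A * B ≤ KK (u x) (v x) := by
    intro x hx
    have hd : ∀ t, HasDerivAt (fun t => KK (u t) (v t) + A * F t - g * t) _ t :=
      fun t => ((h.dK t).add ((hFd t).const_mul A)).sub ((hasDerivAt_id t).const_mul g)
    have := mono_aux _ _ x0 x hx hd ?_
    · rw [hF0] at this
      have h2 := mul_le_mul_of_nonneg_left (hFB x hx) hA0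
      linarith
    · intro t h1 _
      have h2 := h.G_mono hg hx0 h1
      have h3 := GG_le (u t) (v t)
      have h4 := le_abs_self lam.re
      have h5 := nn_nonneg (u t)
      simp only [hA, hf, mul_one]
      nlinarith
  set x1 := x0 + (1 + A * B + |KK (u x0) (v x0)|) / g with hx1
  have hx01 : x0 ≤ x1 := by
    have : 0 ≤ (1 + A * B + |KK (u x0) (v x0)|) / g := by positivity
    linarith
  have hK1 : ∀ x, x1 ≤ x → 1 ≤ KK (u x) (v x) := by
    intro x hx
    have h1 := hK x (hx01.trans hx)
    have h2 : (1 + A * B + |KK (u x0) (v x0)|) ≤ g * (x - x0) := by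
      have : (1 + A * B + |KK (u x0) (v x0)|) / g ≤ x - x0 := by linarith
      rw [div_le_iff₀ hcon] at this
      linarith
    linarith [neg_abs_le (KK (u x0) (v x0))]
  have hf1 : ∀ x, x1 + 1 ≤ x → 1 ≤ f x := by
    intro x hx
    have hd : ∀ t, HasDerivAt (fun t => nn (u t) - t) _ t := fun t => (h.dn t).sub (hasDerivAt_id t)
    have := mono_aux _ _ x1 x (by linarith) hd ?_
    · have := hf0 x1
      simp only [hf] at this ⊢
      linarith
    · intro t h1 _
      have := hK1 t h1
      linarith
  have hlast : ∀ x, x1 + 1 ≤ x → F (x1 + 1) - (x1 + 1) ≤ F x - x := by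
    intro x hx
    have hd : ∀ t, HasDerivAt (fun t => F t - t) _ t := fun t => (hFd t).sub (hasDerivAt_id t)
    refine mono_aux _ _ (x1 + 1) x hx hd ?_
    intro t h1 _
    have := hf1 t h1
    linarith
  have h1 := hlast (x1 + 2 + B) (by linarith)
  have h2 := hFB (x1 + 2 + B) (by linarith)
  have h3 : F x0 ≤ F (x1 + 1) :=
    mono_aux F f x0 (x1 + 1) (by linarith) hFd (fun t _ _ => hf0 t)
  linarith

theorem Sol.eq_mul {lam : ℂ} {a L : ℝ} {c c' s s' u u' w w' : ℝ → ℂ} (hg : Good lam a)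
    (hL : ∀ t : ℝ, a ≤ t → t ≤ a + 1 → 1 + ‖Complex.I * (t : ℂ) ^ 3 - lam‖ ≤ L)
    (hc : Sol lam c c') (hs : Sol lam s s')
    (h0 : c a = 1 ∧ c' a = 0 ∧ s a = 0 ∧ s' a = 1)
    (hu : Sol lam u u') (hua : u a = 1) (hun : ∀ x, a ≤ x → GG (u x) (u' x) ≤ 0)
    (hw : Sol lam w w') (hwn : ∀ x, a ≤ x → GG (w x) (w' x) ≤ 0) (y : ℝ) :
    w y = w a * u y ∧ w' y = w a * u' y := by
  have hu2 : Sol lam (fun x => w a * u x) (fun x => w a * u' x) := by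
    simpa using hu.comb hu (w a) 0
  have hu2n : ∀ x, a ≤ x → GG (w a * u x) (w a * u' x) ≤ 0 := by
    intro x hx
    rw [GG_smul]
    exact mul_nonpos_of_nonneg_of_nonpos (nn_nonneg _) (hun x hx)
  have hz := hw.sub hu2
  set k := w' a - w a * u' a with hk
  have hk0 : nn k = 0 := by
    by_contra hne
    have hpos : 0 < nn k := lt_of_le_of_ne (nn_nonneg k) (Ne.symm hne)
    have h1 := hz.G_gap hg hL (le_refl (a + 1))
    rw [hua, mul_one, sub_self, GG_zero_left, ← hk] at h1
    simp only [nn, Complex.zero_re, Complex.zero_im] at h1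
    change _ + (_ + nn k) * _ ≤ _ at h1
    have hp : 0 < nn k * Real.exp (-L) := by positivity
    set P := nn k * Real.exp (-L) with hP
    have h1' : P ≤ GG (w (a + 1) - w a * u (a + 1)) (w' (a + 1) - w a * u' (a + 1)) := by
      rw [hP]; linarith
    set T := - 2 * GG (w a) (w' a) - 2 * GG (w a * u a) (w a * u' a) with hT
    have hup : ∀ x, a + 1 ≤ x → GG (w x - w a * u x) (w' x - w a * u' x) ≤ T := by
      intro x hx
      have h2 := hw.G_sub hu2 hg (show a ≤ x by linarith)
      have h3 := hwn x (by linarith)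
      have h4 := hu2n x (by linarith)
      have h5 : GG (w a - w a * u a) (w' a - w a * u' a) = 0 := by
        rw [hua, mul_one, sub_self, GG_zero_left]
      rw [h5] at h2
      rw [hT]; linarith
    have hlow : ∀ x, a + 1 ≤ x → P * (x - (a + 1)) ≤ T := by
      intro x hx
      refine le_trans ?_ (hup x hx)
      refine le_trans ?_ (hz.G_exp hg (show a ≤ a + 1 by linarith) hx)
      have := Real.add_one_le_exp (x - (a + 1))
      have h6 := Real.exp_pos (x - (a + 1))
      calc P * (x - (a + 1)) ≤ P * Real.exp (x - (a + 1)) := by gcongr; linarith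
        _ ≤ _ := by gcongr
    have hT0 := hlow (a + 1) le_rfl
    have hT0' : 0 ≤ T := by simpa using hT0
    have := hlow (a + 1 + (T + 1) / P) (by
      have : 0 ≤ (T + 1) / P := by positivity
      linarith)
    have h7 : P * (a + 1 + (T + 1) / P - (a + 1)) = T + 1 := by field_simp; ring
    linarith
  have hk1 : k = 0 := by
    rw [nn_eq] at hk0
    simpa using hk0
  have hza : w a - w a * u a = 0 := by rw [hua]; ring
  have e1 := hz.wronskian hc y a
  have e2 := hz.wronskian hs y a
  have e3 := hc.wronskian hs y a
  simp only [hza, ← hk, hk1, h0.1, h0.2.1, h0.2.2.1, h0.2.2.2] at e1 e2 e3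
  set p := w y - w a * u y
  set p' := w' y - w a * u' y
  have hp : p = 0 := by
    linear_combination (-p) * e3 + c y * e2 - s y * e1
  have hp' : p' = 0 := by
    linear_combination (-p') * e3 + c' y * e2 - s' y * e1
  exact ⟨sub_eq_zero.1 hp, sub_eq_zero.1 hp'⟩

theorem neg_one_case {a : ℝ} {u v : ℝ → ℂ} (h : Sol (-1) u v) (ha : 1 ≤ a) (hg : Good (-1) a)
    (hua : u a = 1) (hun : ∀ x, a ≤ x → GG (u x) (v x) ≤ 0) : KK (u 0) (v 0) < 0 := by
  by_contra hcon
  push Not at hcon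
  have hK : ∀ x, 0 ≤ x → 0 ≤ KK (u x) (v x) := by
    intro x hx
    refine hcon.trans (mono_aux _ _ 0 x hx h.dK ?_)
    intro t _ _
    simp only [Complex.neg_re, Complex.one_re]
    linarith [nn_nonneg (u t), nn_nonneg (v t)]
  have hf : ∀ x, a ≤ x → 1 ≤ nn (u x) := by
    intro x hx
    have := mono_aux _ _ a x hx h.dn (fun t h1 _ => by linarith [hK t (by linarith)])
    rw [hua] at this
    simpa [nn] using this
  have hG : ∀ x, a ≤ x → GG (u a) (v a) + (x - a) ≤ GG (u x) (v x) := by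
    intro x hx
    have hd : ∀ t, HasDerivAt (fun t => GG (u t) (v t) - t) _ t :=
      fun t => (h.dG t).sub (hasDerivAt_id t)
    have := mono_aux _ _ a x hx hd ?_
    · linarith
    · intro t h1 _
      have h2 := hg t h1
      have h3 := hf t h1
      have h4 := nn_nonneg (v t)
      nlinarith
  have h1 := hun a le_rfl
  have h2 := hG (a + 1 - GG (u a) (v a)) (by linarith)
  have h3 := hun (a + 1 - GG (u a) (v a)) (by linarith)
  linarith

theorem sol_of_eig {lam : ℂ} {ψ : ℝ → ℂ} (hd : ContDiff ℝ 2 ψ)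
    (he : ∀ x : ℝ, -(deriv (deriv ψ) x) + Complex.I * (x : ℂ) ^ 3 * ψ x = lam * ψ x) :
    Sol lam ψ (deriv ψ) := by
  have h1 : ContDiff ℝ 1 (deriv ψ) := by
    have h2 : ContDiff ℝ (1 + 1) ψ := by
      rw [one_add_one_eq_two]; exact hd
    exact (contDiff_succ_iff_deriv.1 h2).2.2
  constructor
  · intro x
    exact (hd.differentiable (by norm_num) x).hasDerivAt
  · intro x
    refine ((h1.differentiable (by norm_num)) x).hasDerivAt.congr_deriv ?_
    linear_combination - he x

open ComplexConjugate in
theorem Sol.reflect {lam : ℂ} {u v : ℝ → ℂ} (h : Sol lam u v) :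
    Sol (conj lam) (fun x => conj (u (-x))) (fun x => - conj (v (-x))) := by
  have key : ∀ (f : ℝ → ℂ) (f' : ℂ) (x : ℝ), HasDerivAt f f' (-x) →
      HasDerivAt (fun t => conj (f (-t))) (- conj f') x := by
    intro f f' x hf
    have h1 : HasDerivAt (fun t => f (-t)) (-f') x := by
      have := HasDerivAt.scomp x hf (hasDerivAt_neg x)
      simpa [Function.comp_def] using this
    have h2 := Complex.conjCLE.toContinuousLinearMap.hasFDerivAt.comp_hasDerivAt x h1
    simpa [Function.comp_def] using h2
  constructor
  · intro x
    exact key u _ x (h.du (-x))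
  · intro x
    refine (key v _ x (h.dv (-x))).neg.congr_deriv ?_
    simp
    left; ring

open ComplexConjugate

/-- The set of eigenvalues has no accumulation point in ℂ: the spectrum is discrete. -/
theorem eigenvalues_discrete :
    ∀ lam₀ : ℂ, ∃ r > (0 : ℝ), ∀ lam : ℂ, IsEigenvalueICO lam →
      ‖lam - lam₀‖ < r → lam = lam₀ := by
  intro lam₀
  set R := ‖lam₀‖ + 2 with hR
  have hR2 : 2 ≤ R := by linarith [norm_nonneg lam₀]
  set a := 2 * R + 2 with ha
  set L := 1 + ((a + 1) ^ 3 + R) with hLdef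
  set U := Metric.ball (0 : ℂ) R with hU
  have hg : ∀ lam ∈ U, Good lam a := by
    intro lam hl x hx
    have hl' : ‖lam‖ < R := by simpa [hU] using hl
    have h1 := (le_abs_self _).trans (Complex.abs_re_le_norm lam)
    have h2 := (le_abs_self _).trans (Complex.abs_im_le_norm lam)
    have h3 : x ≤ x ^ 3 := by
      have : 1 ≤ x := by linarith
      nlinarith [mul_nonneg (show 0 ≤ x by linarith) (show 0 ≤ x ^ 2 - 1 by nlinarith)]
    linarith
  have hL : ∀ lam ∈ U, ∀ t : ℝ, a ≤ t → t ≤ a + 1 →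
      1 + ‖Complex.I * (t : ℂ) ^ 3 - lam‖ ≤ L := by
    intro lam hl t h1 h2
    have hl' : ‖lam‖ < R := by simpa [hU] using hl
    have h3 : ‖Complex.I * (t : ℂ) ^ 3‖ ≤ (a + 1) ^ 3 := by
      have ht : 0 ≤ t := by linarith
      rw [norm_mul, Complex.norm_I, one_mul, norm_pow, Complex.norm_real, Real.norm_eq_abs,
        abs_of_nonneg ht]
      gcongr
    have := norm_sub_le (Complex.I * (t : ℂ) ^ 3) lam
    rw [hLdef]; linarith
  obtain ⟨c, c', s, s', hc, hs, h0, dc, dc', ds, ds'⟩ := exists_base a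
  obtain ⟨m, hm, hmG⟩ := weyl hg hL hc hs h0 dc ds
  have hsol : ∀ lam, Sol lam (fun x => c lam x + m lam * s lam x)
      (fun x => c' lam x + m lam * s' lam x) := by
    intro lam
    simpa using (hc lam).comb (hs lam) 1 (m lam)
  have hua : ∀ lam, c lam a + m lam * s lam a = 1 := by
    intro lam
    rw [(h0 lam).1, (h0 lam).2.2.1]; ring
  set α : ℂ → ℂ := fun lam => c lam 0 + m lam * s lam 0 with hα
  set β : ℂ → ℂ := fun lam => c' lam 0 + m lam * s' lam 0 with hβ
  have dα : DifferentiableOn ℂ α U :=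
    (dc 0).differentiableOn.add (hm.mul (ds 0).differentiableOn)
  have dβ : DifferentiableOn ℂ β U :=
    (dc' 0).differentiableOn.add (hm.mul (ds' 0).differentiableOn)
  have hUc : ∀ lam ∈ U, conj lam ∈ U := by
    intro lam hl
    simpa [hU] using hl
  have hcc : ∀ f : ℂ → ℂ, DifferentiableOn ℂ f U →
      DifferentiableOn ℂ (fun lam => conj (f (conj lam))) U := by
    intro f hf lam hl
    have h1 : DifferentiableAt ℂ f (conj lam) :=
      (hf _ (hUc lam hl)).differentiableAt (Metric.isOpen_ball.mem_nhds (hUc lam hl))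
    exact (differentiableAt_conj_conj_iff.2 h1).differentiableWithinAt
  set D : ℂ → ℂ := fun lam => α lam * conj (β (conj lam)) + β lam * conj (α (conj lam)) with hD
  have dD : DifferentiableOn ℂ D U := (dα.mul (hcc β dβ)).add (dβ.mul (hcc α dα))
  have aD : AnalyticOnNhd ℂ D U := dD.analyticOnNhd Metric.isOpen_ball
  have hm1 : (-1 : ℂ) ∈ U := by simp [hU]; linarith
  have hD1 : D (-1) ≠ 0 := by
    have h1 := neg_one_case (hsol (-1)) (by linarith) (hg _ hm1) (hua _) (hmG _ hm1)
    intro h2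
    have h3 : (D (-1)).re = 2 * KK (α (-1)) (β (-1)) := by
      simp [hD, KK]; ring
    rw [h2] at h3
    simp only [Complex.zero_re] at h3
    have h4 : KK (α (-1)) (β (-1)) < 0 := h1
    linarith
  have hE : ∀ lam ∈ U, IsEigenvalueICO lam → D lam = 0 := by
    rintro lam hl ⟨ψ, hne, hcd, hint, heq⟩
    have hψ := sol_of_eig hcd heq
    have hφ := hψ.reflect
    have hlc := hUc lam hl
    have hint' : Integrable (fun x : ℝ => ‖conj (ψ (-x))‖ ^ 2) := by
      simpa using hint.comp_neg
    have e1 := Sol.eq_mul (hg lam hl) (hL lam hl) (hc lam) (hs lam) (h0 lam) (hsol lam) (hua lam)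
      (hmG lam hl) hψ (fun x hx => hψ.G_nonpos (hg lam hl) hint hx)
    have e2 := Sol.eq_mul (hg _ hlc) (hL _ hlc) (hc _) (hs _) (h0 _) (hsol _) (hua _)
      (hmG _ hlc) hφ (fun x hx => hφ.G_nonpos (hg _ hlc) hint' hx)
    set q := conj (ψ (-a)) with hq
    have hq0 : q ≠ 0 := by
      intro h
      apply hne
      funext x
      have := (e2 (-x)).1
      simp only [h, zero_mul, neg_neg] at this
      simpa using this
    obtain ⟨e1a, e1b⟩ := e1 0
    obtain ⟨e2a, e2b⟩ := e2 0
    have f1 : conj (ψ 0) = q * α (conj lam) := by simpa [hα] using e2a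
    have f2 : - conj (deriv ψ 0) = q * β (conj lam) := by simpa [hβ] using e2b
    have f1' : ψ 0 = conj q * conj (α (conj lam)) := by
      rw [← map_mul, ← f1, Complex.conj_conj]
    have f2' : - deriv ψ 0 = conj q * conj (β (conj lam)) := by
      rw [← map_mul, ← f2, map_neg, Complex.conj_conj]
    have g1 : ψ 0 = ψ a * α lam := e1a
    have g2 : deriv ψ 0 = ψ a * β lam := e1b
    have : conj q * D lam = 0 := by
      simp only [hD]
      linear_combination (-α lam) * f2' - β lam * f1' - α lam * g2 + β lam * g1
    rcases mul_eq_zero.1 this with h | h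
    · exact absurd ((map_eq_zero _).1 h) hq0
    · exact h
  have hl0 : lam₀ ∈ U := by simp [hU, hR]
  have hev : ∀ᶠ z in nhdsWithin lam₀ {lam₀}ᶜ, D z ≠ 0 := by
    by_contra hcon
    have hfr : ∃ᶠ z in nhdsWithin lam₀ {lam₀}ᶜ, D z = 0 := by
      rw [Filter.not_eventually] at hcon
      exact hcon.mono fun z hz => not_not.1 hz
    exact hD1 (aD.eqOn_zero_of_preconnected_of_frequently_eq_zero
      (convex_ball _ _).isPreconnected hl0 hfr hm1)
  rw [eventually_nhdsWithin_iff] at hev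
  have hev2 := hev.and (Metric.isOpen_ball.mem_nhds hl0)
  obtain ⟨r, hr, hball⟩ := Metric.eventually_nhds_iff.1 hev2
  refine ⟨r, hr, fun lam hlam hlt => ?_⟩
  by_contra hne
  have h1 := hball (show dist lam lam₀ < r by rw [dist_eq_norm]; exact hlt)
  exact h1.1 hne (hE lam h1.2 hlam)
end

section
/- There exists a standard solution family: a function f : ℂ × ℂ → ℂ such that (1) for every λ ∈ ℂ the map z ↦ f(z,λ) is entire and satisfies ∂²f/∂z²(z,λ) = (z³ + λ)·f(z,λ) for all z ∈ ℂ, (2) for every z ∈ ℂ the map λ ↦ f(z,λ) is entire, and (3) for every ε > 0 and every compact set L ⊂ ℂ there exist C > 0 and R > 0 such that |f(z,λ)·z^{3/4}·e^{(2/5)·z^{5/2}} − 1| ≤ C·|z|^{−1/2} whenever λ ∈ L, |z| ≥ R and |arg z| ≤ 3π/5 − ε. -/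
namespace StdFam
open Complex Set Filter Topology MeasureTheory

theorem diffOn_integral {U : Set ℂ} (hU : IsOpen U) (F : ℂ → ℝ → ℂ) (g : ℝ → ℝ)
    (hm : ∀ x ∈ U, AEStronglyMeasurable (F x) (volume.restrict (Ioi (0:ℝ))))
    (hd : ∀ s > (0:ℝ), DifferentiableOn ℂ (fun x => F x s) U)
    (hb : ∀ x ∈ U, ∀ s > (0:ℝ), ‖F x s‖ ≤ g s) (hg : IntegrableOn g (Ioi (0:ℝ))) :
    DifferentiableOn ℂ (fun x => ∫ s in Ioi (0:ℝ), F x s) U := by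
  intro x₀ hx₀
  obtain ⟨r, hr, hrU⟩ := Metric.isOpen_iff.1 hU x₀ hx₀
  have hae : ∀ᵐ s ∂(volume.restrict (Ioi (0:ℝ))), s ∈ Ioi (0:ℝ) := ae_restrict_mem measurableSet_Ioi
  have key : ∀ s > (0:ℝ), ∀ x ∈ Metric.ball x₀ (r/2),
      HasDerivAt (fun y => F y s) (deriv (fun y => F y s) x) x ∧
      ‖deriv (fun y => F y s) x‖ ≤ g s / (r/4) := by
    intro s hs x hx
    have hsub : Metric.closedBall x (r/4) ⊆ U := by
      intro y hy
      apply hrU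
      rw [Metric.mem_ball] at *
      rw [Metric.mem_closedBall] at hy
      linarith [dist_triangle y x x₀]
    have hxU : x ∈ U := hsub (Metric.mem_closedBall_self (by positivity))
    refine ⟨((hd s hs).differentiableAt (hU.mem_nhds hxU)).hasDerivAt, ?_⟩
    apply Complex.norm_deriv_le_of_forall_mem_sphere_norm_le (by positivity)
    · apply DifferentiableOn.diffContOnCl
      apply (hd s hs).mono
      exact (closure_mono Metric.ball_subset_closedBall).trans
        (Metric.isClosed_closedBall.closure_eq.subset.trans hsub)
    · intro z hz
      exact hb z (hsub (Metric.sphere_subset_closedBall hz)) s hs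
  have hball : Metric.ball x₀ (r/2) ∈ 𝓝 x₀ := Metric.ball_mem_nhds _ (by positivity)
  have hmem : x₀ ∈ Metric.ball x₀ (r/2) := Metric.mem_ball_self (by positivity)
  have hmeas' : AEStronglyMeasurable (fun s => deriv (fun y => F y s) x₀)
      (volume.restrict (Ioi (0:ℝ))) := by
    set v : ℕ → ℂ := fun n => ((r/2/(n+1) : ℝ) : ℂ) / 2 with hv
    have hvpos : ∀ n : ℕ, 0 < r/2/((n:ℝ)+1) := fun n => by positivity
    have hv0 : Tendsto v atTop (𝓝 0) := by
      have h1 : Tendsto (fun n : ℕ => r/2/((n:ℝ)+1)) atTop (𝓝 0) := by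
        have := (tendsto_one_div_add_atTop_nhds_zero_nat (𝕜 := ℝ)).const_mul (r/2)
        simpa [mul_one_div, div_eq_mul_inv] using this
      have h2 : Tendsto (fun n : ℕ => ((r/2/((n:ℝ)+1) : ℝ) : ℂ)) atTop (𝓝 0) := by
        exact_mod_cast (Complex.continuous_ofReal.tendsto 0).comp h1
      simpa [hv] using h2.div_const 2
    have hvne : ∀ n, v n ≠ 0 := by
      intro n
      simp only [hv]
      exact div_ne_zero (by exact_mod_cast (hvpos n).ne') two_ne_zero
    have hvU : ∀ n, x₀ + v n ∈ U := by
      intro n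
      apply hrU
      rw [Metric.mem_ball, dist_eq_norm, add_sub_cancel_left]
      simp only [hv]
      rw [norm_div, Complex.norm_real, Real.norm_eq_abs, abs_of_pos (hvpos n)]
      have : r/2/((n:ℝ)+1) ≤ r/2 := div_le_self (by positivity) (by linarith [n.cast_nonneg (α := ℝ)])
      simp
      linarith
    refine aestronglyMeasurable_of_tendsto_ae atTop
      (f := fun n s => (v n)⁻¹ * (F (x₀ + v n) s - F x₀ s)) ?_ ?_
    · intro n
      exact ((hm _ (hvU n)).sub (hm _ hx₀)).const_mul _
    · filter_upwards [hae] with s hs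
      have := (key s hs x₀ hmem).1.tendsto_slope_zero
      have h3 : Tendsto v atTop (𝓝[≠] 0) :=
        tendsto_nhdsWithin_iff.2 ⟨hv0, Eventually.of_forall fun n => hvne n⟩
      simpa [Function.comp_def, smul_eq_mul] using this.comp h3
  have := hasDerivAt_integral_of_dominated_loc_of_deriv_le (μ := volume.restrict (Ioi (0:ℝ)))
    (F := F) (x₀ := x₀) (s := Metric.ball x₀ (r/2)) (bound := fun s => g s / (r/4))
    (F' := fun x s => deriv (fun y => F y s) x) hball ?_ ?_ hmeas' ?_ ?_ ?_
  · exact this.2.differentiableAt.differentiableWithinAt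
  · filter_upwards [hU.mem_nhds hx₀] with x hx using hm x hx
  · refine Integrable.mono' hg (hm _ hx₀) ?_
    filter_upwards [hae] with s hs using hb _ hx₀ s hs
  · filter_upwards [hae] with s hs x hx using (key s hs x hx).2
  · exact hg.div_const _
  · filter_upwards [hae] with s hs x hx using (key s hs x hx).1

theorem intOn_pow {r : ℝ} (hr : 0 < r) :
    IntegrableOn (fun s : ℝ => (r + s) ^ (-(6/5) : ℝ)) (Ioi 0) := by
  have := integrableOn_add_rpow_Ioi_of_lt (a := -(6/5)) (c := 0) (m := r) (by norm_num) (by linarith)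
  simpa [add_comm] using this

theorem shift_Ioi (F : ℝ → ℂ) (x : ℝ) :
    ∫ s in Ioi (0:ℝ), F (x + s) = ∫ t in Ioi x, F t := by
  have h := (measurePreserving_add_left volume x).setIntegral_preimage_emb
    (measurableEmbedding_addLeft x) F (Ioi x)
  simpa using h

theorem shift_Ioi_real (F : ℝ → ℝ) (x : ℝ) :
    ∫ s in Ioi (0:ℝ), F (x + s) = ∫ t in Ioi x, F t := by
  have h := (measurePreserving_add_left volume x).setIntegral_preimage_emb
    (measurableEmbedding_addLeft x) F (Ioi x)
  simpa using h

theorem integral_pow65 {r : ℝ} (hr : 0 < r) :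
    ∫ s in Ioi (0:ℝ), (r + s) ^ (-(6/5) : ℝ) = 5 * r ^ (-(1/5) : ℝ) := by
  rw [shift_Ioi_real (fun x : ℝ => x ^ (-(6/5) : ℝ)) r, integral_Ioi_rpow_of_lt (by norm_num) hr]
  norm_num
  ring

theorem rightDeriv_laplace (g : ℝ → ℂ) (hc : ContinuousOn g (Ici 0)) (hi : IntegrableOn g (Ioi 0))
    (ν : ℂ) (hν : 0 ≤ ν.re) :
    HasDerivWithinAt (fun x : ℝ => ∫ s in Ioi (0:ℝ), exp (-ν * s) * g (x + s))
      (ν * (∫ s in Ioi (0:ℝ), exp (-ν * s) * g s) - g 0) (Ici 0) 0 := by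
  set I := ∫ s in Ioi (0:ℝ), exp (-ν * s) * g s with hI
  have hce : Continuous (fun s : ℝ => exp (-ν * s)) := by fun_prop
  have hcg : ContinuousOn (fun s : ℝ => exp (-ν * s) * g s) (Ici 0) := hce.continuousOn.mul hc
  have hinteg : IntegrableOn (fun s : ℝ => exp (-ν * s) * g s) (Ioi 0) := by
    refine Integrable.mono' hi.norm (hce.aestronglyMeasurable.mul hi.aestronglyMeasurable) ?_
    filter_upwards [ae_restrict_mem measurableSet_Ioi] with s hs
    rw [norm_mul, Complex.norm_exp]
    have : (-ν * (s:ℂ)).re ≤ 0 := by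
      simp
      exact mul_nonneg hν (le_of_lt hs)
    calc _ ≤ 1 * ‖g s‖ := by gcongr; exact Real.exp_le_one_iff.2 this
      _ = _ := one_mul _
  have hform : ∀ x ∈ Ici (0:ℝ), (∫ s in Ioi (0:ℝ), exp (-ν * s) * g (x + s)) =
      exp (ν * x) * (I - ∫ t in (0:ℝ)..x, exp (-ν * t) * g t) := by
    intro x hx
    have h1 : ∀ s : ℝ, exp (-ν * s) * g (x + s) =
        exp (ν * x) * (exp (-ν * ((x + s : ℝ):ℂ)) * g (x + s)) := by
      intro s
      rw [← mul_assoc, ← Complex.exp_add]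
      congr 2
      push_cast
      ring
    simp_rw [h1]
    rw [integral_const_mul, shift_Ioi (fun t : ℝ => exp (-ν * t) * g t) x]
    congr 1
    rw [hI, intervalIntegral.integral_of_le hx, eq_sub_iff_add_eq, add_comm,
      ← setIntegral_union (Ioc_disjoint_Ioi le_rfl) measurableSet_Ioi
        (hinteg.mono_set Ioc_subset_Ioi_self) (hinteg.mono_set (Ioi_subset_Ioi hx)),
      Ioc_union_Ioi_eq_Ioi hx]
  have hd1 : HasDerivWithinAt (fun x : ℝ => ∫ t in (0:ℝ)..x, exp (-ν * t) * g t)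
      (exp (-ν * (0:ℝ)) * g 0) (Ici 0) 0 := by
    apply intervalIntegral.integral_hasDerivWithinAt_right (t := Ioi 0)
    · simp
    · exact ⟨Ioi 0, self_mem_nhdsWithin, hinteg.aestronglyMeasurable⟩
    · exact (hcg 0 self_mem_Ici).mono Ioi_subset_Ici_self
  have hd2 : HasDerivWithinAt (fun x : ℝ => exp (ν * x)) (ν) (Ici 0) 0 := by
    have h : HasDerivAt (fun x : ℝ => exp (ν * x)) (exp (ν * (0:ℝ)) * (ν * 1)) 0 := by
      have h0 : HasDerivAt (fun x : ℂ => exp (ν * x)) (exp (ν * (0:ℝ)) * (ν * 1)) ((0:ℝ):ℂ) :=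
        ((hasDerivAt_id _).const_mul ν).cexp
      exact h0.comp_ofReal
    simpa using h.hasDerivWithinAt
  have hd3 := hd2.mul (hd1.const_sub I)
  refine (hd3.congr (fun x hx => hform x hx) (hform 0 self_mem_Ici)).congr_deriv ?_
  simp
  ring

theorem rightDeriv_of_complex {u : ℂ → ℂ} {η d : ℂ} (h : HasDerivAt u d η) :
    HasDerivWithinAt (fun x : ℝ => u (η + x)) d (Ici 0) 0 := by
  have h0 : HasDerivAt (fun x : ℂ => u (η + x)) d ((0:ℝ):ℂ) := by
    have : HasDerivAt u d (η + ((0:ℝ):ℂ)) := by simpa using h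
    exact HasDerivAt.comp_const_add _ _ this
  exact h0.comp_ofReal.hasDerivWithinAt

/-- Hypotheses for the Volterra iteration. -/
structure VData (Ω B : Set ℂ) (q : ℂ → ℂ → ℂ) (M r : ℝ) (μ : ℂ) : Prop where
  openΩ : IsOpen Ω
  openB : IsOpen B
  shift : ∀ η ∈ Ω, ∀ s : ℝ, 0 ≤ s → η + s ∈ Ω
  qη : ∀ l ∈ B, DifferentiableOn ℂ (fun η => q η l) Ω
  ql : ∀ η ∈ Ω, DifferentiableOn ℂ (fun l => q η l) B
  rpos : 0 < r
  hr : ∀ η ∈ Ω, r ≤ ‖η‖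
  Mpos : 0 ≤ M
  qb : ∀ η ∈ Ω, ∀ s : ℝ, 0 ≤ s → ∀ l ∈ B, ‖q (η + s) l‖ ≤ M * (‖η‖ + s) ^ (-(6/5) : ℝ)
  μre : 0 < μ.re
  μnorm : ‖μ‖ = 4/5
  small : 25/2 * M * r ^ (-(1/5) : ℝ) ≤ 1/4

/-- The iterates are separately holomorphic and bounded by `K`. -/
structure GoodF (Ω B : Set ℂ) (K : ℝ) (F : ℂ → ℂ → ℂ) : Prop where
  dη : ∀ l ∈ B, DifferentiableOn ℂ (fun η => F η l) Ω
  dl : ∀ η ∈ Ω, DifferentiableOn ℂ (fun l => F η l) B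
  bd : ∀ η ∈ Ω, ∀ l ∈ B, ‖F η l‖ ≤ K

/-- Volterra operator with kernel `w`. -/
noncomputable def Vop (q : ℂ → ℂ → ℂ) (w : ℝ → ℂ) (F : ℂ → ℂ → ℂ) (η l : ℂ) : ℂ :=
  ∫ s in Ioi (0:ℝ), w s * (q (η + s) l * F (η + s) l)

section
variable {Ω B : Set ℂ} {q : ℂ → ℂ → ℂ} {M r : ℝ} {μ : ℂ}

theorem VData.normpos (D : VData Ω B q M r μ) {η : ℂ} (h : η ∈ Ω) : 0 < ‖η‖ :=
  lt_of_lt_of_le D.rpos (D.hr η h)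

theorem VData.integrand_le (D : VData Ω B q M r μ) {w : ℝ → ℂ} {W K : ℝ}
    (hW : ∀ s > (0:ℝ), ‖w s‖ ≤ W) {F : ℂ → ℂ → ℂ} {η l : ℂ} (hη : η ∈ Ω) (hl : l ∈ B)
    (hF : ∀ s > (0:ℝ), ‖F (η + s) l‖ ≤ K) (s : ℝ) (hs : 0 < s) :
    ‖w s * (q (η + s) l * F (η + s) l)‖ ≤ W * M * K * (‖η‖ + s) ^ (-(6/5) : ℝ) := by
  have hW0 : 0 ≤ W := (norm_nonneg _).trans (hW s hs)
  have hM := D.Mpos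
  rw [norm_mul, norm_mul]
  have h0 : 0 ≤ (‖η‖ + s) ^ (-(6/5) : ℝ) := by positivity
  calc _ ≤ W * ((M * (‖η‖ + s) ^ (-(6/5) : ℝ)) * K) := by
        have := hW s hs
        have := D.qb η hη s hs.le l hl
        have := hF s hs
        gcongr
    _ = _ := by ring

theorem VData.vop_le (D : VData Ω B q M r μ) {w : ℝ → ℂ} {W K : ℝ}
    (hW : ∀ s > (0:ℝ), ‖w s‖ ≤ W) {F : ℂ → ℂ → ℂ} {η l : ℂ} (hη : η ∈ Ω) (hl : l ∈ B)
    (hF : ∀ s > (0:ℝ), ‖F (η + s) l‖ ≤ K) :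
    ‖Vop q w F η l‖ ≤ W * M * K * (5 * ‖η‖ ^ (-(1/5) : ℝ)) := by
  rw [← integral_pow65 (D.normpos hη), ← integral_const_mul]
  apply norm_integral_le_of_norm_le ((intOn_pow (D.normpos hη)).const_mul _)
  filter_upwards [ae_restrict_mem measurableSet_Ioi] with s hs
  exact D.integrand_le hW hη hl hF s hs

theorem VData.cont_shift (D : VData Ω B q M r μ) {f : ℂ → ℂ} (hf : ContinuousOn f Ω) {η : ℂ}
    (hη : η ∈ Ω) : ContinuousOn (fun s : ℝ => f (η + s)) (Ici 0) := by
  apply hf.comp (by fun_prop)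
  intro s hs
  exact D.shift η hη s hs

theorem VData.cont_integrand (D : VData Ω B q M r μ) {K : ℝ} {w : ℝ → ℂ} (hw : Continuous w)
    {F : ℂ → ℂ → ℂ} (hF : GoodF Ω B K F) {η l : ℂ} (hη : η ∈ Ω) (hl : l ∈ B) :
    ContinuousOn (fun s : ℝ => w s * (q (η + s) l * F (η + s) l)) (Ici 0) :=
  hw.continuousOn.mul ((D.cont_shift (D.qη l hl).continuousOn hη).mul
    (D.cont_shift (hF.dη l hl).continuousOn hη))

theorem VData.meas_integrand (D : VData Ω B q M r μ) {K : ℝ} {w : ℝ → ℂ} (hw : Continuous w)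
    {F : ℂ → ℂ → ℂ} (hF : GoodF Ω B K F) {η l : ℂ} (hη : η ∈ Ω) (hl : l ∈ B) :
    AEStronglyMeasurable (fun s : ℝ => w s * (q (η + s) l * F (η + s) l))
      (volume.restrict (Ioi 0)) :=
  ((D.cont_integrand hw hF hη hl).mono Ioi_subset_Ici_self).aestronglyMeasurable measurableSet_Ioi

theorem VData.int_integrand (D : VData Ω B q M r μ) {K W : ℝ} {w : ℝ → ℂ} (hw : Continuous w)
    (hW : ∀ s > (0:ℝ), ‖w s‖ ≤ W)
    {F : ℂ → ℂ → ℂ} (hF : GoodF Ω B K F) {η l : ℂ} (hη : η ∈ Ω) (hl : l ∈ B) :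
    IntegrableOn (fun s : ℝ => w s * (q (η + s) l * F (η + s) l)) (Ioi 0) := by
  refine Integrable.mono' ((intOn_pow (D.normpos hη)).const_mul (W * M * K))
    (D.meas_integrand hw hF hη hl) ?_
  filter_upwards [ae_restrict_mem measurableSet_Ioi] with s hs
  exact D.integrand_le hW hη hl (fun s hs => hF.bd _ (D.shift η hη s hs.le) l hl) s hs

theorem VData.integrand_le' (D : VData Ω B q M r μ) {w : ℝ → ℂ} {W K : ℝ} (hK : 0 ≤ K)
    (hW : ∀ s > (0:ℝ), ‖w s‖ ≤ W) {F : ℂ → ℂ → ℂ} (hF : GoodF Ω B K F) {η l : ℂ}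
    (hη : η ∈ Ω) (hl : l ∈ B) (s : ℝ) (hs : 0 < s) :
    ‖w s * (q (η + s) l * F (η + s) l)‖ ≤ W * M * K * (r + s) ^ (-(6/5) : ℝ) := by
  refine (D.integrand_le hW hη hl (fun s hs => hF.bd _ (D.shift η hη s hs.le) l hl) s hs).trans ?_
  have hW0 : 0 ≤ W := (norm_nonneg _).trans (hW s hs)
  have hM := D.Mpos
  have := D.rpos
  have h1 : (‖η‖ + s) ^ (-(6/5) : ℝ) ≤ (r + s) ^ (-(6/5) : ℝ) :=
    Real.rpow_le_rpow_of_nonpos (by positivity) (by linarith [D.hr η hη]) (by norm_num)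
  gcongr

theorem VData.vop_dη (D : VData Ω B q M r μ) {w : ℝ → ℂ} {W K : ℝ} (hK : 0 ≤ K)
    (hw : Continuous w) (hW : ∀ s > (0:ℝ), ‖w s‖ ≤ W) {F : ℂ → ℂ → ℂ} (hF : GoodF Ω B K F)
    {l : ℂ} (hl : l ∈ B) : DifferentiableOn ℂ (fun η => Vop q w F η l) Ω := by
  apply diffOn_integral D.openΩ (fun η s => w s * (q (η + s) l * F (η + s) l))
    (fun s => W * M * K * (r + s) ^ (-(6/5) : ℝ))
  · intro η hη
    exact D.meas_integrand hw hF hη hl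
  · intro s hs
    have hm : MapsTo (fun η : ℂ => η + s) Ω Ω := fun η hη => D.shift η hη s hs.le
    have hd : DifferentiableOn ℂ (fun η : ℂ => η + s) Ω := by fun_prop
    exact (((D.qη l hl).comp hd hm).mul ((hF.dη l hl).comp hd hm)).const_mul _
  · intro η hη s hs
    exact D.integrand_le' hK hW hF hη hl s hs
  · exact (intOn_pow D.rpos).const_mul _

theorem VData.vop_dl (D : VData Ω B q M r μ) {w : ℝ → ℂ} {W K : ℝ} (hK : 0 ≤ K)
    (hw : Continuous w) (hW : ∀ s > (0:ℝ), ‖w s‖ ≤ W) {F : ℂ → ℂ → ℂ} (hF : GoodF Ω B K F)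
    {η : ℂ} (hη : η ∈ Ω) : DifferentiableOn ℂ (fun l => Vop q w F η l) B := by
  apply diffOn_integral D.openB (fun l s => w s * (q (η + s) l * F (η + s) l))
    (fun s => W * M * K * (r + s) ^ (-(6/5) : ℝ))
  · intro l hl
    exact D.meas_integrand hw hF hη hl
  · intro s hs
    have hm := D.shift η hη s hs.le
    exact ((D.ql _ hm).mul (hF.dl _ hm)).const_mul _
  · intro l hl s hs
    exact D.integrand_le' hK hW hF hη hl s hs
  · exact (intOn_pow D.rpos).const_mul _

/-- kernel -/
noncomputable def kern (μ : ℂ) (s : ℝ) : ℂ := (1 - exp (-μ * s)) / μ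

theorem kern_cont (μ : ℂ) : Continuous (kern μ) := by
  unfold kern; fun_prop

theorem VData.exp_le (D : VData Ω B q M r μ) (s : ℝ) (hs : s > 0) : ‖exp (-μ * s)‖ ≤ 1 := by
  rw [Complex.norm_exp]
  apply Real.exp_le_one_iff.2
  simp
  exact mul_nonneg D.μre.le hs.le

theorem VData.kern_le (D : VData Ω B q M r μ) (s : ℝ) (hs : s > 0) : ‖kern μ s‖ ≤ 5/2 := by
  unfold kern
  rw [norm_div, D.μnorm]
  have := norm_sub_le (1:ℂ) (exp (-μ * s))
  have h2 := D.exp_le s hs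
  rw [norm_one] at this
  rw [div_le_iff₀ (by norm_num)]
  linarith

theorem VData.pow_le (D : VData Ω B q M r μ) {η : ℂ} (hη : η ∈ Ω) :
    ‖η‖ ^ (-(1/5) : ℝ) ≤ r ^ (-(1/5) : ℝ) :=
  Real.rpow_le_rpow_of_nonpos D.rpos (D.hr η hη) (by norm_num)

theorem VData.vop_small (D : VData Ω B q M r μ) {K : ℝ} (hK : 0 ≤ K)
    {F : ℂ → ℂ → ℂ} {η l : ℂ} (hη : η ∈ Ω) (hl : l ∈ B)
    (hF : ∀ s > (0:ℝ), ‖F (η + s) l‖ ≤ K) : ‖Vop q (kern μ) F η l‖ ≤ K / 4 := by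
  refine (D.vop_le D.kern_le hη hl hF).trans ?_
  have h1 := D.pow_le hη
  have h2 := D.small
  have hM := D.Mpos
  calc 5/2 * M * K * (5 * ‖η‖ ^ (-(1/5) : ℝ)) ≤ 5/2 * M * K * (5 * r ^ (-(1/5) : ℝ)) := by gcongr
    _ = K * (25/2 * M * r ^ (-(1/5) : ℝ)) := by ring
    _ ≤ K * (1/4) := by gcongr
    _ = _ := by ring

/-- The Picard iterates. -/
noncomputable def iter (q : ℂ → ℂ → ℂ) (μ : ℂ) : ℕ → ℂ → ℂ → ℂ
  | 0 => fun _ _ => 1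
  | n + 1 => fun η l => 1 + Vop q (kern μ) (iter q μ n) η l

theorem VData.good_iter (D : VData Ω B q M r μ) (n : ℕ) : GoodF Ω B 2 (iter q μ n) := by
  induction n with
  | zero =>
    refine ⟨fun l _ => ?_, fun l _ => ?_, fun _ _ _ _ => ?_⟩
    · simp only [iter]; fun_prop
    · simp only [iter]; fun_prop
    · simp [iter]
  | succ n ih =>
    refine ⟨fun l hl => ?_, fun η hη => ?_, fun η hη l hl => ?_⟩
    · simp only [iter]
      exact (D.vop_dη (by norm_num) (kern_cont μ) D.kern_le ih hl).const_add _
    · simp only [iter]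
      exact (D.vop_dl (by norm_num) (kern_cont μ) D.kern_le ih hη).const_add _
    · simp only [iter]
      have := D.vop_small (K := 2) (by norm_num) hη hl
        (F := iter q μ n) (fun s hs => ih.bd _ (D.shift η hη s hs.le) l hl)
      refine (norm_add_le _ _).trans ?_
      rw [norm_one]
      linarith

theorem VData.vop_sub (D : VData Ω B q M r μ) {F G : ℂ → ℂ → ℂ} {K K' : ℝ} (hF : GoodF Ω B K F)
    (hG : GoodF Ω B K' G) {η l : ℂ} (hη : η ∈ Ω) (hl : l ∈ B) :
    Vop q (kern μ) F η l - Vop q (kern μ) G η l =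
      Vop q (kern μ) (fun η l => F η l - G η l) η l := by
  unfold Vop
  rw [← integral_sub (D.int_integrand (kern_cont μ) D.kern_le hF hη hl)
    (D.int_integrand (kern_cont μ) D.kern_le hG hη hl)]
  congr 1
  ext s
  ring

theorem VData.iter_step (D : VData Ω B q M r μ) (n : ℕ) : ∀ η ∈ Ω, ∀ l ∈ B,
    dist (iter q μ n η l) (iter q μ (n+1) η l) ≤ 1 * (1/4) ^ n := by
  induction n with
  | zero =>
    intro η hη l hl
    rw [dist_comm, dist_eq_norm]
    simp only [iter, add_sub_cancel_left]
    refine (D.vop_small (K := 1) (by norm_num) hη hl (by simp)).trans (by norm_num)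
  | succ n ih =>
    intro η hη l hl
    rw [dist_eq_norm]
    simp only [iter, add_sub_add_left_eq_sub]
    change ‖Vop q (kern μ) (iter q μ n) η l - Vop q (kern μ) (iter q μ (n+1)) η l‖ ≤ _
    rw [D.vop_sub (D.good_iter n) (D.good_iter (n+1)) hη hl]
    refine (D.vop_small (K := 1 * (1/4)^n) (by positivity) hη hl ?_).trans (le_of_eq ?_)
    · intro s hs
      rw [← dist_eq_norm]
      exact ih _ (D.shift η hη s hs.le) l hl
    · rw [pow_succ]; ring

/-- The limit. -/
noncomputable def usol (q : ℂ → ℂ → ℂ) (μ : ℂ) (η l : ℂ) : ℂ :=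
  limUnder atTop (fun n => iter q μ n η l)

theorem VData.tendsto_usol (D : VData Ω B q M r μ) {η l : ℂ} (hη : η ∈ Ω) (hl : l ∈ B) :
    Tendsto (fun n => iter q μ n η l) atTop (𝓝 (usol q μ η l)) :=
  (cauchySeq_of_le_geometric (1/4) 1 (by norm_num)
    (fun n => D.iter_step n η hη l hl)).tendsto_limUnder

theorem VData.dist_usol (D : VData Ω B q M r μ) {η l : ℂ} (hη : η ∈ Ω) (hl : l ∈ B) (n : ℕ) :
    ‖iter q μ n η l - usol q μ η l‖ ≤ 2 * (1/4) ^ n := by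
  rw [← dist_eq_norm]
  refine (dist_le_of_le_geometric_of_tendsto (1/4) 1 (by norm_num)
    (fun n => D.iter_step n η hη l hl) (D.tendsto_usol hη hl) n).trans ?_
  have : 0 < (1/4:ℝ)^n := by positivity
  rw [div_le_iff₀ (by norm_num)]
  linarith

theorem geo_tendsto : Tendsto (fun n : ℕ => 2 * (1/4:ℝ) ^ n) atTop (𝓝 0) := by
  simpa using (tendsto_pow_atTop_nhds_zero_of_lt_one (r := (1/4:ℝ)) (by norm_num) (by norm_num)).const_mul 2

theorem unif_of_geo {S : Set ℂ} {F : ℕ → ℂ → ℂ} {u : ℂ → ℂ}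
    (h : ∀ x ∈ S, ∀ n, ‖F n x - u x‖ ≤ 2 * (1/4) ^ n) : TendstoUniformlyOn F u atTop S := by
  rw [Metric.tendstoUniformlyOn_iff]
  intro ε hε
  filter_upwards [geo_tendsto.eventually (gt_mem_nhds hε)] with n hn x hx
  rw [dist_comm, dist_eq_norm]
  exact (h x hx n).trans_lt hn

theorem VData.good_usol (D : VData Ω B q M r μ) : GoodF Ω B 2 (usol q μ) := by
  refine ⟨fun l hl => ?_, fun η hη => ?_, fun η hη l hl => ?_⟩
  · exact (unif_of_geo (F := fun n η => iter q μ n η l)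
      (fun η hη n => D.dist_usol hη hl n)).tendstoLocallyUniformlyOn.differentiableOn
      (Eventually.of_forall fun n => (D.good_iter n).dη l hl) D.openΩ
  · exact (unif_of_geo (F := fun n l => iter q μ n η l)
      (fun l hl n => D.dist_usol hη hl n)).tendstoLocallyUniformlyOn.differentiableOn
      (Eventually.of_forall fun n => (D.good_iter n).dl η hη) D.openB
  · exact le_of_tendsto (D.tendsto_usol hη hl).norm
      (Eventually.of_forall fun n => (D.good_iter n).bd η hη l hl)

theorem VData.usol_eq (D : VData Ω B q M r μ) {η l : ℂ} (hη : η ∈ Ω) (hl : l ∈ B) :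
    usol q μ η l = 1 + Vop q (kern μ) (usol q μ) η l := by
  have h1 := (D.tendsto_usol hη hl).comp (tendsto_add_atTop_nat 1)
  refine tendsto_nhds_unique h1 ?_
  rw [tendsto_iff_norm_sub_tendsto_zero]
  refine squeeze_zero (fun _ => norm_nonneg _) (fun n => ?_) geo_tendsto
  simp only [Function.comp, iter, add_sub_add_left_eq_sub]
  rw [D.vop_sub (D.good_iter n) D.good_usol hη hl]
  refine (D.vop_small (K := 2 * (1/4)^n) (by positivity) hη hl ?_).trans ?_
  · intro s hs
    exact D.dist_usol (D.shift η hη s hs.le) hl n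
  · have : 0 < (1/4:ℝ)^n := by positivity
    linarith

theorem VData.usol_asymp (D : VData Ω B q M r μ) {η l : ℂ} (hη : η ∈ Ω) (hl : l ∈ B) :
    ‖usol q μ η l - 1‖ ≤ 25 * M * ‖η‖ ^ (-(1/5) : ℝ) := by
  rw [D.usol_eq hη hl, add_sub_cancel_left]
  refine (D.vop_le D.kern_le hη hl
    (fun s hs => D.good_usol.bd _ (D.shift η hη s hs.le) l hl)).trans (le_of_eq ?_)
  ring

theorem VData.usol_ne (D : VData Ω B q M r μ) {η l : ℂ} (hη : η ∈ Ω) (hl : l ∈ B) :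
    usol q μ η l ≠ 0 := by
  have h : ‖usol q μ η l - 1‖ ≤ 2/4 := by
    rw [D.usol_eq hη hl, add_sub_cancel_left]
    exact D.vop_small (by norm_num) hη hl
      (fun s hs => D.good_usol.bd _ (D.shift η hη s hs.le) l hl)
  intro h0
  rw [h0] at h
  norm_num at h

theorem VData.μne (D : VData Ω B q M r μ) : μ ≠ 0 := by
  intro h
  have := D.μre
  simp [h] at this

theorem VData.usol_deriv (D : VData Ω B q M r μ) {η l : ℂ} (hη : η ∈ Ω) (hl : l ∈ B) :
    deriv (fun η => usol q μ η l) η = - Vop q (fun s => exp (-μ * s)) (usol q μ) η l := by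
  have hμ := D.μne
  have hd : HasDerivAt (fun η => usol q μ η l) (deriv (fun η => usol q μ η l) η) η :=
    ((D.good_usol.dη l hl).differentiableAt (D.openΩ.mem_nhds hη)).hasDerivAt
  have h1 := rightDeriv_of_complex hd
  set g : ℝ → ℂ := fun s => q (η + s) l * usol q μ (η + s) l with hg
  have hgc : ContinuousOn g (Ici 0) := by
    simpa using D.cont_integrand (w := fun _ => 1) continuous_const D.good_usol hη hl
  have hgi : IntegrableOn g (Ioi 0) := by
    simpa using D.int_integrand (w := fun _ => 1) (W := 1) continuous_const (by simp) D.good_usol hη hl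
  have a0 := rightDeriv_laplace g hgc hgi 0 (by simp)
  have a1 := rightDeriv_laplace g hgc hgi μ D.μre.le
  have h2 := ((a0.sub a1).div_const μ).const_add 1
  have hcong : ∀ x ∈ Ici (0:ℝ), usol q μ (η + x) l =
      1 + ((∫ s in Ioi (0:ℝ), exp (-0 * s) * g (x + s)) -
        (∫ s in Ioi (0:ℝ), exp (-μ * s) * g (x + s))) / μ := by
    intro x hx
    have hx' := D.shift η hη x hx
    rw [D.usol_eq hx' hl]
    congr 1
    have e1 : ∀ s : ℝ, g (x + s) = q (η + x + s) l * usol q μ (η + x + s) l := by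
      intro s
      simp only [hg]
      push_cast
      rw [add_assoc]
    rw [← integral_sub, ← integral_div]
    · unfold Vop
      congr 1
      ext s
      rw [e1]
      simp [kern]
      ring
    · simp_rw [e1]
      simpa [IntegrableOn] using
        D.int_integrand (w := fun _ => 1) (W := 1) continuous_const (by simp) D.good_usol hx' hl
    · simp_rw [e1]
      exact D.int_integrand (w := fun s : ℝ => exp (-μ * s)) (W := 1) (by fun_prop) D.exp_le
        D.good_usol hx' hl
  have h3 := h2.congr (fun x hx => hcong x hx) (hcong 0 self_mem_Ici)
  have h4 := (uniqueDiffOn_Ici (0:ℝ) 0 self_mem_Ici).eq_deriv _ h1 h3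
  rw [h4]
  simp only [Vop, hg]
  field_simp
  simp
  ring

theorem VData.usol_deriv_dl (D : VData Ω B q M r μ) {η : ℂ} (hη : η ∈ Ω) :
    DifferentiableOn ℂ (fun l => deriv (fun η => usol q μ η l) η) B := by
  refine DifferentiableOn.congr (f := fun l => - Vop q (fun s => exp (-μ * s)) (usol q μ) η l) ?_
    (fun l hl => D.usol_deriv hη hl)
  exact (D.vop_dl (by norm_num) (by fun_prop) D.exp_le D.good_usol hη).neg

theorem VData.usol_deriv_le (D : VData Ω B q M r μ) {η l : ℂ} (hη : η ∈ Ω) (hl : l ∈ B) :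
    ‖deriv (fun η => usol q μ η l) η‖ ≤ 10 * M * ‖η‖ ^ (-(1/5) : ℝ) := by
  rw [D.usol_deriv hη hl, norm_neg]
  refine (D.vop_le D.exp_le hη hl
    (fun s hs => D.good_usol.bd _ (D.shift η hη s hs.le) l hl)).trans (le_of_eq ?_)
  ring

theorem VData.usol_ode (D : VData Ω B q M r μ) {η l : ℂ} (hη : η ∈ Ω) (hl : l ∈ B) :
    HasDerivAt (deriv (fun η => usol q μ η l))
      (μ * deriv (fun η => usol q μ η l) η + q η l * usol q μ η l) η := by
  have hdd : DifferentiableOn ℂ (deriv (fun η => usol q μ η l)) Ω :=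
    (D.good_usol.dη l hl).deriv D.openΩ
  have hd := (hdd.differentiableAt (D.openΩ.mem_nhds hη)).hasDerivAt
  refine hd.congr_deriv ?_
  have h1 := rightDeriv_of_complex hd
  set g : ℝ → ℂ := fun s => q (η + s) l * usol q μ (η + s) l with hg
  have hgc : ContinuousOn g (Ici 0) := by
    simpa using D.cont_integrand (w := fun _ => 1) continuous_const D.good_usol hη hl
  have hgi : IntegrableOn g (Ioi 0) := by
    simpa using D.int_integrand (w := fun _ => 1) (W := 1) continuous_const (by simp) D.good_usol hη hl
  have a1 := (rightDeriv_laplace g hgc hgi μ D.μre.le).neg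
  have hcong : ∀ x ∈ Ici (0:ℝ), deriv (fun η => usol q μ η l) (η + x) =
      -(∫ s in Ioi (0:ℝ), exp (-μ * s) * g (x + s)) := by
    intro x hx
    rw [D.usol_deriv (D.shift η hη x hx) hl]
    unfold Vop
    congr 2
    ext s
    simp only [hg]
    push_cast
    rw [add_assoc]
  have h3 := a1.congr (fun x hx => hcong x hx) (hcong 0 self_mem_Ici)
  have h4 := (uniqueDiffOn_Ici (0:ℝ) 0 self_mem_Ici).eq_deriv _ h1 h3
  rw [h4, D.usol_deriv hη hl]
  simp only [Vop, hg]
  simp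
  ring

end

/-- Families of coefficients of entire functions, with bounds locally uniform in the parameter. -/
structure EntF (a : ℕ → ℂ → ℂ) : Prop where
  diff : ∀ n, Differentiable ℂ (a n)
  bd : ∀ Λ : ℝ, ∀ ρ : ℝ, 0 < ρ → ∃ K : ℝ, ∀ n, ∀ l : ℂ, ‖l‖ ≤ Λ → ‖a n l‖ * ρ ^ n ≤ K

/-- Sum of the series. -/
noncomputable def ser (a : ℕ → ℂ → ℂ) (z l : ℂ) : ℂ := ∑' n, a n l * z ^ n

/-- Coefficients of the derivative. -/
noncomputable def dco (a : ℕ → ℂ → ℂ) (n : ℕ) (l : ℂ) : ℂ := (n + 1) * a (n + 1) l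

theorem EntF.le {a : ℕ → ℂ → ℂ} (h : EntF a) (Λ ρ : ℝ) (hρ : 0 < ρ) :
    ∃ K : ℝ, ∀ n, ∀ l : ℂ, ‖l‖ ≤ Λ → ∀ z : ℂ, ‖z‖ ≤ ρ → ‖a n l * z ^ n‖ ≤ K * (1/2) ^ n := by
  obtain ⟨K, hK⟩ := h.bd Λ (2 * ρ) (by positivity)
  refine ⟨K, fun n l hl z hz => ?_⟩
  rw [norm_mul, norm_pow]
  calc ‖a n l‖ * ‖z‖ ^ n ≤ ‖a n l‖ * ρ ^ n := by gcongr
    _ = ‖a n l‖ * (2 * ρ) ^ n * (1/2) ^ n := by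
        rw [mul_assoc, ← mul_pow]
        congr 2
        ring
    _ ≤ _ := by gcongr; exact hK n l hl

theorem geo_summ (K : ℝ) : Summable (fun n : ℕ => K * (1/2:ℝ) ^ n) :=
  (summable_geometric_of_lt_one (by norm_num) (by norm_num)).mul_left K

theorem EntF.summ {a : ℕ → ℂ → ℂ} (h : EntF a) (z l : ℂ) : Summable (fun n => a n l * z ^ n) := by
  obtain ⟨K, hK⟩ := h.le ‖l‖ (‖z‖ + 1) (by positivity)
  exact Summable.of_norm_bounded (geo_summ K) (fun n => hK n l le_rfl z (by linarith))

theorem EntF.ser_dl {a : ℕ → ℂ → ℂ} (h : EntF a) (z : ℂ) : Differentiable ℂ (fun l => ser a z l) := by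
  intro l
  obtain ⟨K, hK⟩ := h.le (‖l‖ + 1) (‖z‖ + 1) (by positivity)
  have := differentiableOn_tsum_of_summable_norm (F := fun n l => a n l * z ^ n)
    (U := Metric.ball 0 (‖l‖ + 1)) (geo_summ K) (fun n => ((h.diff n).mul_const _).differentiableOn)
    Metric.isOpen_ball (fun n w hw => hK n w (by simpa using (mem_ball_zero_iff.1 hw).le) z (by linarith))
  exact this.differentiableAt (Metric.isOpen_ball.mem_nhds (by simp))

theorem EntF.dco {a : ℕ → ℂ → ℂ} (h : EntF a) : EntF (dco a) := by
  refine ⟨fun n => (h.diff (n+1)).const_mul _, fun Λ ρ hρ => ?_⟩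
  obtain ⟨K, hK⟩ := h.bd Λ (2 * ρ) (by positivity)
  refine ⟨K / ρ, fun n l hl => ?_⟩
  have h1 := hK (n+1) l hl
  rw [le_div_iff₀ hρ]
  refine le_trans ?_ h1
  simp only [StdFam.dco, norm_mul]
  have h2 : ‖((n:ℂ) + 1)‖ ≤ 2 ^ (n+1) := by
    have : ((n:ℂ) + 1) = ((n + 1 : ℕ) : ℂ) := by push_cast; ring
    rw [this, Complex.norm_natCast]
    exact_mod_cast (Nat.lt_two_pow_self (n := n+1)).le
  calc ‖((n:ℂ) + 1)‖ * ‖a (n+1) l‖ * ρ ^ n * ρ ≤ 2 ^ (n+1) * ‖a (n+1) l‖ * ρ ^ n * ρ := by gcongr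
    _ = _ := by rw [mul_pow]; ring

theorem EntF.hasDeriv {a : ℕ → ℂ → ℂ} (h : EntF a) (z l : ℂ) :
    HasDerivAt (fun z => ser a z l) (ser (StdFam.dco a) z l) z := by
  have hd : DifferentiableOn ℂ (fun z => ser a z l) univ := by
    intro z _
    obtain ⟨K, hK⟩ := h.le ‖l‖ (‖z‖ + 1) (by positivity)
    have := differentiableOn_tsum_of_summable_norm (F := fun n z => a n l * z ^ n)
      (U := Metric.ball 0 (‖z‖ + 1)) (geo_summ K) (fun n => by fun_prop)
      Metric.isOpen_ball (fun n w hw => hK n l le_rfl w (by simpa using (mem_ball_zero_iff.1 hw).le))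
    exact (this.differentiableAt (Metric.isOpen_ball.mem_nhds (by simp))).differentiableWithinAt
  obtain ⟨K, hK⟩ := h.le ‖l‖ (‖z‖ + 1) (by positivity)
  have h2 := hasSum_deriv_of_summable_norm (F := fun n z => a n l * z ^ n)
      (U := Metric.ball 0 (‖z‖ + 1)) (z := z) (geo_summ K) (fun n => by fun_prop)
      Metric.isOpen_ball (fun n w hw => hK n l le_rfl w (by simpa using (mem_ball_zero_iff.1 hw).le))
      (by simp)
  have hz := (hd.differentiableAt univ_mem (x := z)).hasDerivAt
  refine hz.congr_deriv ?_
  have h3 : HasSum (fun n => deriv (fun z => a n l * z ^ n) z) (ser (StdFam.dco a) z l) := by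
    have h4 : ∀ n, deriv (fun z => a n l * z ^ n) z = a n l * (n * z ^ (n-1)) := by
      intro n; simp
    simp_rw [h4]
    rw [← hasSum_nat_add_iff' 1]
    have := (h.dco.summ z l).hasSum
    simp only [Finset.range_one, Finset.sum_singleton, Nat.cast_zero, zero_mul, mul_zero, sub_zero]
    refine this.congr_fun ?_
    intro n
    simp [StdFam.dco]
    ring
  exact h2.unique h3

/-- Coefficients of the power series solutions. -/
noncomputable def coef (α β : ℂ) : ℕ → ℂ → ℂ
  | 0, _ => α
  | 1, _ => β
  | 2, l => l * α / 2
  | 3, l => l * β / 6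
  | 4, l => l * (l * α / 2) / 12
  | n + 5, l => (l * coef α β (n + 3) l + coef α β n l) / ((n + 5) * (n + 4))

theorem coef_diff (α β : ℂ) : ∀ n, Differentiable ℂ (coef α β n)
  | 0 => by simp only [Differentiable, coef]; intro l; fun_prop
  | 1 => by simp only [Differentiable, coef]; intro l; fun_prop
  | 2 => by simp only [Differentiable, coef]; intro l; fun_prop
  | 3 => by simp only [Differentiable, coef]; intro l; fun_prop
  | 4 => by simp only [Differentiable, coef]; intro l; fun_prop
  | n + 5 => by
    have h1 := coef_diff α β (n+3)
    have h2 := coef_diff α β n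
    intro l
    simp only [coef]
    have h3 := h1 l
    have h4 := h2 l
    fun_prop

theorem coef_rec (α β : ℂ) (n : ℕ) (l : ℂ) :
    ((n:ℂ) + 2) * (n + 1) * coef α β (n + 2) l =
      l * coef α β n l + (if 3 ≤ n then coef α β (n - 3) l else 0) := by
  match n with
  | 0 => simp [coef]; ring
  | 1 => simp [coef]; ring
  | 2 => simp [coef]; ring
  | n + 3 =>
    have h1 : (n:ℂ) + 5 ≠ 0 := by exact_mod_cast (by omega : n + 5 ≠ 0)
    have h2 : (n:ℂ) + 4 ≠ 0 := by exact_mod_cast (by omega : n + 4 ≠ 0)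
    have : coef α β (n + 3 + 2) l = (l * coef α β (n + 3) l + coef α β n l) / ((n + 5) * (n + 4)) := by
      change coef α β (n + 5) l = _
      rw [coef]
    rw [this]
    push_cast
    rw [show (n:ℂ) + 3 + 2 = n + 5 by ring, show (n:ℂ) + 3 + 1 = n + 4 by ring]
    field_simp

theorem coef_ent (α β : ℂ) : EntF (coef α β) := by
  refine ⟨coef_diff α β, fun Λ ρ hρ => ?_⟩
  have hfin : ∀ n, ∃ K : ℝ, ∀ l : ℂ, ‖l‖ ≤ Λ → ‖coef α β n l‖ * ρ ^ n ≤ K := by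
    intro n
    obtain ⟨K, hK⟩ := (isCompact_closedBall (0:ℂ) Λ).exists_bound_of_continuousOn
      (coef_diff α β n).continuous.continuousOn
    exact ⟨K * ρ ^ n, fun l hl => by gcongr; exact hK l (by simpa using hl)⟩
  choose K hK using hfin
  obtain ⟨N, hN⟩ := exists_nat_ge (|Λ| * ρ ^ 2 + ρ ^ 5)
  refine ⟨∑ i ∈ Finset.range (N + 5), |K i|, fun n l hl => ?_⟩
  set S := ∑ i ∈ Finset.range (N + 5), |K i| with hS
  have hS0 : 0 ≤ S := Finset.sum_nonneg fun i _ => abs_nonneg _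
  induction n using Nat.strong_induction_on with
  | _ n ih =>
    by_cases hn : n < N + 5
    · refine (hK n l hl).trans ((le_abs_self _).trans ?_)
      exact Finset.single_le_sum (f := fun i => |K i|) (fun i _ => abs_nonneg _) (Finset.mem_range.2 hn)
    · obtain ⟨m, rfl⟩ : ∃ m, n = m + 5 := ⟨n - 5, by omega⟩
      have hmN : (N:ℝ) ≤ m := by exact_mod_cast (by omega : N ≤ m)
      have i1 := ih (m + 3) (by omega)
      have i2 := ih m (by omega)
      have hnn : ‖((m:ℂ) + 5) * (m + 4)‖ = ((m:ℝ) + 5) * (m + 4) := by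
        rw [norm_mul]
        congr 1
        · exact_mod_cast Complex.norm_natCast (m + 5)
        · exact_mod_cast Complex.norm_natCast (m + 4)
      rw [coef, norm_div, hnn, div_mul_eq_mul_div, div_le_iff₀ (by positivity)]
      have hl' : ‖l‖ ≤ |Λ| := hl.trans (le_abs_self _)
      calc ‖l * coef α β (m + 3) l + coef α β m l‖ * ρ ^ (m + 5)
          ≤ (|Λ| * ‖coef α β (m + 3) l‖ + ‖coef α β m l‖) * ρ ^ (m + 5) := by
            gcongr
            refine (norm_add_le _ _).trans ?_
            rw [norm_mul]
            gcongr
        _ = |Λ| * ρ ^ 2 * (‖coef α β (m + 3) l‖ * ρ ^ (m + 3)) + ρ ^ 5 * (‖coef α β m l‖ * ρ ^ m) := by ring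
        _ ≤ |Λ| * ρ ^ 2 * S + ρ ^ 5 * S := by gcongr
        _ = S * (|Λ| * ρ ^ 2 + ρ ^ 5) := by ring
        _ ≤ S * (((m:ℝ) + 5) * (m + 4)) := by
            gcongr
            have : (0:ℝ) ≤ m := by positivity
            nlinarith

theorem coef_ode (α β z l : ℂ) :
    ser (dco (dco (coef α β))) z l = (z ^ 3 + l) * ser (coef α β) z l := by
  have hs := (coef_ent α β).summ z l
  have h1 : HasSum (fun n => l * coef α β n l * z ^ n) (l * ser (coef α β) z l) := by
    simpa [mul_assoc, ser] using hs.hasSum.mul_left l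
  have h2 : HasSum (fun n => (if 3 ≤ n then coef α β (n - 3) l else 0) * z ^ n)
      (z ^ 3 * ser (coef α β) z l) := by
    rw [← hasSum_nat_add_iff' 3]
    have h3 : ∑ i ∈ Finset.range 3, (if 3 ≤ i then coef α β (i - 3) l else 0) * z ^ i = 0 := by
      simp [Finset.sum_range_succ]
    rw [h3, sub_zero]
    refine (hs.hasSum.mul_left (z ^ 3)).congr_fun ?_
    intro n
    simp
    ring
  have h3 := h2.add h1
  rw [add_mul, ← h3.tsum_eq]
  unfold ser
  congr 1
  ext n
  have := coef_rec α β n l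
  simp only [dco]
  push_cast
  linear_combination z ^ n * this

/-- first and second basic solutions and derivatives -/
noncomputable def comb (c₁ c₂ z l : ℂ) : ℂ := c₁ * ser (coef 1 0) z l + c₂ * ser (coef 0 1) z l

noncomputable def comb' (c₁ c₂ z l : ℂ) : ℂ :=
  c₁ * ser (dco (coef 1 0)) z l + c₂ * ser (dco (coef 0 1)) z l

theorem comb_deriv (c₁ c₂ z l : ℂ) : HasDerivAt (fun z => comb c₁ c₂ z l) (comb' c₁ c₂ z l) z :=
  (((coef_ent 1 0).hasDeriv z l).const_mul c₁).add (((coef_ent 0 1).hasDeriv z l).const_mul c₂)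

theorem comb'_deriv (c₁ c₂ z l : ℂ) :
    HasDerivAt (fun z => comb' c₁ c₂ z l) ((z ^ 3 + l) * comb c₁ c₂ z l) z := by
  refine ((((coef_ent 1 0).dco.hasDeriv z l).const_mul c₁).add
    (((coef_ent 0 1).dco.hasDeriv z l).const_mul c₂)).congr_deriv ?_
  rw [coef_ode, coef_ode, comb]
  ring

theorem ser_zero (a : ℕ → ℂ → ℂ) (l : ℂ) : ser a 0 l = a 0 l := by
  unfold ser
  rw [tsum_eq_single 0]
  · simp
  · intro n hn
    simp [hn]

theorem wronsk (z l : ℂ) : ser (coef 1 0) z l * ser (dco (coef 0 1)) z l -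
    ser (dco (coef 1 0)) z l * ser (coef 0 1) z l = 1 := by
  have hd : ∀ z, HasDerivAt (fun z => ser (coef 1 0) z l * ser (dco (coef 0 1)) z l -
    ser (dco (coef 1 0)) z l * ser (coef 0 1) z l) 0 z := by
    intro z
    refine ((((coef_ent 1 0).hasDeriv z l).mul ((coef_ent 0 1).dco.hasDeriv z l)).sub
      (((coef_ent 1 0).dco.hasDeriv z l).mul ((coef_ent 0 1).hasDeriv z l))).congr_deriv ?_
    rw [coef_ode, coef_ode]
    ring
  have := is_const_of_deriv_eq_zero (fun z => (hd z).differentiableAt) (fun z => (hd z).deriv) z 0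
  rw [this]
  simp [ser_zero, dco, coef]

/-- Solve the initial value problem at `z₀`. -/
noncomputable def ivp1 (z₀ g h l : ℂ) : ℂ := g * ser (dco (coef 0 1)) z₀ l - h * ser (coef 0 1) z₀ l
noncomputable def ivp2 (z₀ g h l : ℂ) : ℂ := h * ser (coef 1 0) z₀ l - g * ser (dco (coef 1 0)) z₀ l

theorem ivp_val (z₀ g h l : ℂ) : comb (ivp1 z₀ g h l) (ivp2 z₀ g h l) z₀ l = g := by
  unfold comb ivp1 ivp2
  linear_combination g * wronsk z₀ l

theorem ivp_der (z₀ g h l : ℂ) : comb' (ivp1 z₀ g h l) (ivp2 z₀ g h l) z₀ l = h := by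
  unfold comb' ivp1 ivp2
  linear_combination h * wronsk z₀ l

noncomputable def sig (θ : ℝ) : ℂ := exp (θ * I)
noncomputable def zmap (θ : ℝ) (η : ℂ) : ℂ := exp ((2/5) * (log η + θ * I))
noncomputable def pfac (θ : ℝ) (η : ℂ) : ℂ := exp ((3/10) * (log η + θ * I))
noncomputable def emap (θ : ℝ) (η : ℂ) : ℂ := exp ((2/5) * sig θ * η)
noncomputable def qpot (θ : ℝ) (η l : ℂ) : ℂ := (4/25) * l * zmap θ η ^ 2 / η ^ 2 - (21/100) / η ^ 2
noncomputable def muc (θ : ℝ) : ℂ := (4/5) * sig θ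
noncomputable def Utr (f : ℂ → ℂ) (θ : ℝ) (η : ℂ) : ℂ := f (zmap θ η) * pfac θ η * emap θ η
noncomputable def Utr' (f f' : ℂ → ℂ) (θ : ℝ) (η : ℂ) : ℂ :=
  pfac θ η * emap θ η * (f' (zmap θ η) * (2/5 * zmap θ η / η) +
    f (zmap θ η) * (3/10 / η + 2/5 * sig θ))

theorem zmap_deriv (θ : ℝ) {η : ℂ} (h : η ∈ slitPlane) :
    HasDerivAt (zmap θ) (2/5 * zmap θ η / η) η := by
  have := (((Complex.hasDerivAt_log h).add_const (θ * I)).const_mul (2/5:ℂ)).cexp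
  refine this.congr_deriv ?_
  simp only [zmap]
  ring

theorem pfac_deriv (θ : ℝ) {η : ℂ} (h : η ∈ slitPlane) :
    HasDerivAt (pfac θ) (3/10 * pfac θ η / η) η := by
  have := (((Complex.hasDerivAt_log h).add_const (θ * I)).const_mul (3/10:ℂ)).cexp
  refine this.congr_deriv ?_
  simp only [pfac]
  ring

theorem emap_deriv (θ : ℝ) (η : ℂ) : HasDerivAt (emap θ) (2/5 * sig θ * emap θ η) η := by
  have := ((hasDerivAt_id η).const_mul (2/5 * sig θ)).cexp
  refine this.congr_deriv ?_
  simp only [emap, id]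
  ring

theorem zmap_pow (θ : ℝ) {η : ℂ} (h : η ≠ 0) : zmap θ η ^ 5 = sig θ ^ 2 * η ^ 2 := by
  unfold zmap sig
  rw [← Complex.exp_nat_mul, ← Complex.exp_nat_mul]
  rw [show ((5:ℕ):ℂ) * (2/5 * (log η + θ * I)) = ((2:ℕ):ℂ) * (θ * I) + ((2:ℕ):ℂ) * log η by push_cast; ring]
  rw [Complex.exp_add, Complex.exp_nat_mul (log η), Complex.exp_log h]

theorem Utr_deriv {f f' : ℂ → ℂ} (hf : ∀ z, HasDerivAt f (f' z) z) (θ : ℝ) {η : ℂ}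
    (h : η ∈ slitPlane) : HasDerivAt (Utr f θ) (Utr' f f' θ η) η := by
  have := (((hf (zmap θ η)).comp η (zmap_deriv θ h)).mul (pfac_deriv θ h)).mul (emap_deriv θ η)
  refine this.congr_deriv ?_
  simp only [Utr', Function.comp, Pi.mul_apply]
  ring

theorem Utr'_deriv {f f' : ℂ → ℂ} {l : ℂ} (hf : ∀ z, HasDerivAt f (f' z) z)
    (hf' : ∀ z, HasDerivAt f' ((z ^ 3 + l) * f z) z) (θ : ℝ) {η : ℂ}
    (h : η ∈ slitPlane) : HasDerivAt (Utr' f f' θ)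
      (muc θ * Utr' f f' θ η + qpot θ η l * Utr f θ η) η := by
  have hη : η ≠ 0 := slitPlane_ne_zero h
  have hz := zmap_deriv θ h
  have h1 := ((hf' (zmap θ η)).comp η hz).mul ((hz.const_mul (2/5:ℂ)).div (hasDerivAt_id η) hη)
  have h2 := ((hf (zmap θ η)).comp η hz).mul
    ((((hasDerivAt_const η (3/10:ℂ)).div (hasDerivAt_id η) hη)).add_const (2/5 * sig θ))
  have h3 := ((pfac_deriv θ h).mul (emap_deriv θ η)).mul (h1.add h2)
  refine h3.congr_deriv ?_
  have h5 := zmap_pow θ hη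
  simp only [Utr', Utr, qpot, muc, Function.comp, Pi.mul_apply, Pi.add_apply, Pi.div_apply, id]
  generalize zmap θ η = z at *
  generalize pfac θ η = p at *
  generalize emap θ η = e at *
  generalize sig θ = σ at *
  generalize f z = a at *
  generalize f' z = b at *
  field_simp
  linear_combination (1000000 * p * e * a) * h5

/-- Wronskian lemma. -/
theorem wronsk_unique {Ω : Set ℂ} (hΩ : IsOpen Ω) (hc : IsPreconnected Ω) {μ : ℂ} {q : ℂ → ℂ}
    {u u' U U' : ℂ → ℂ} (hu : ∀ η ∈ Ω, HasDerivAt u (u' η) η)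
    (hu' : ∀ η ∈ Ω, HasDerivAt u' (μ * u' η + q η * u η) η)
    (hU : ∀ η ∈ Ω, HasDerivAt U (U' η) η)
    (hU' : ∀ η ∈ Ω, HasDerivAt U' (μ * U' η + q η * U η) η) :
    ∃ K : ℂ, ∀ η ∈ Ω, u η * U' η - u' η * U η = K * exp (μ * η) := by
  have hd : ∀ η ∈ Ω, HasDerivAt (fun η => (u η * U' η - u' η * U η) * exp (-μ * η)) 0 η := by
    intro η hη
    have h1 := (((hu η hη).mul (hU' η hη)).sub ((hu' η hη).mul (hU η hη))).mul
      ((hasDerivAt_id η).const_mul (-μ)).cexp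
    refine h1.congr_deriv ?_
    simp
    ring
  obtain ⟨K, hK⟩ := hΩ.exists_is_const_of_deriv_eq_zero hc
    (fun η hη => (hd η hη).differentiableAt.differentiableWithinAt) (fun η hη => (hd η hη).deriv)
  refine ⟨K, fun η hη => ?_⟩
  rw [← hK η hη, mul_assoc, ← Complex.exp_add]
  simp

theorem const_ratio {Ω : Set ℂ} (hΩ : IsOpen Ω) (hc : IsPreconnected Ω)
    {u u' U U' : ℂ → ℂ} (hu : ∀ η ∈ Ω, HasDerivAt u (u' η) η)
    (hU : ∀ η ∈ Ω, HasDerivAt U (U' η) η) (h0 : ∀ η ∈ Ω, u η ≠ 0)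
    (hw : ∀ η ∈ Ω, u η * U' η - u' η * U η = 0) : ∃ c : ℂ, ∀ η ∈ Ω, U η = c * u η := by
  have hd : ∀ η ∈ Ω, HasDerivAt (fun η => U η / u η) 0 η := by
    intro η hη
    refine ((hU η hη).div (hu η hη) (h0 η hη)).congr_deriv ?_
    rw [div_eq_zero_iff]
    left
    linear_combination hw η hη
  obtain ⟨K, hK⟩ := hΩ.exists_is_const_of_deriv_eq_zero hc
    (fun η hη => (hd η hη).differentiableAt.differentiableWithinAt) (fun η hη => (hd η hη).deriv)
  refine ⟨K, fun η hη => ?_⟩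
  rw [← hK η hη, div_mul_cancel₀ _ (h0 η hη)]

/-- The shifted sector. -/
def Sect (κ ρ : ℝ) : Set ℂ := {η | -κ * ‖η - ρ‖ < (η - ρ).re}

theorem sect_open (κ ρ : ℝ) : IsOpen (Sect κ ρ) := by
  apply isOpen_lt <;> fun_prop

theorem sect_shift {κ ρ : ℝ} (h0 : 0 ≤ κ) (h1 : κ < 1) {η : ℂ} (h : η ∈ Sect κ ρ) (s : ℝ) (hs : 0 ≤ s) :
    η + s ∈ Sect κ ρ := by
  simp only [Sect, mem_ofPred_eq] at *
  have h2 : ‖η - ρ‖ ≤ ‖η + s - ρ‖ + s := by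
    calc ‖η - ρ‖ = ‖(η + s - ρ) - (s:ℂ)‖ := by congr 1; ring
      _ ≤ ‖η + s - ρ‖ + ‖(s:ℂ)‖ := norm_sub_le _ _
      _ = _ := by rw [Complex.norm_real, Real.norm_of_nonneg hs]
  have h3 : (η + s - ρ).re = (η - ρ).re + s := by simp; ring
  rw [h3]
  nlinarith

theorem sect_anti {κ ρ ρ' : ℝ} (h0 : 0 ≤ κ) (h1 : κ < 1) (hρ : ρ ≤ ρ') : Sect κ ρ' ⊆ Sect κ ρ := by
  intro η h
  have h2 : η + ((ρ - ρ' : ℝ) : ℂ) ∈ Sect κ ρ := by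
    simp only [Sect, mem_ofPred_eq] at *
    have : η + ((ρ - ρ' : ℝ) : ℂ) - ρ = η - ρ' := by push_cast; ring
    rwa [this]
  have h3 := sect_shift h0 h1 h2 (ρ' - ρ) (by linarith)
  have : η + ((ρ - ρ' : ℝ) : ℂ) + ((ρ' - ρ : ℝ) : ℂ) = η := by push_cast; ring
  rwa [this] at h3

theorem sect_low {κ ρ : ℝ} (h0 : 0 ≤ κ) (h1 : κ < 1) {η : ℂ} (h : η ∈ Sect κ ρ) (s : ℝ) (hs : 0 ≤ s) :
    (1 - κ) / 2 * (‖η - ρ‖ + s) ≤ ‖η - ρ + s‖ := by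
  simp only [Sect, mem_ofPred_eq] at h
  generalize η - (ρ:ℂ) = w at *
  apply le_of_sq_le_sq _ (norm_nonneg _)
  have e1 : ‖w + s‖ ^ 2 = ‖w‖ ^ 2 + 2 * s * w.re + s ^ 2 := by
    rw [Complex.sq_norm, Complex.sq_norm, Complex.normSq_apply, Complex.normSq_apply]
    simp
    ring
  rw [e1, mul_pow]
  have hw := norm_nonneg w
  have e2 : ((1 - κ) / 2) ^ 2 ≤ (1 - κ) / 2 := by nlinarith
  have e3 : ((1 - κ) / 2) ^ 2 * (‖w‖ + s) ^ 2 ≤ (1 - κ) / 2 * (‖w‖ + s) ^ 2 := by gcongr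
  nlinarith [sq_nonneg (‖w‖ - s), mul_nonneg hs hw, mul_le_mul_of_nonneg_left h.le hs]

theorem sect_norm {κ ρ : ℝ} (h0 : 0 ≤ κ) (h1 : κ < 1) (hρ : 0 ≤ ρ) {η : ℂ} (h : η ∈ Sect κ ρ) :
    (1 - κ) / 2 * ρ ≤ ‖η‖ := by
  have := sect_low h0 h1 h ρ hρ
  rw [sub_add_cancel] at this
  refine le_trans ?_ this
  have := norm_nonneg (η - ρ)
  gcongr
  linarith

theorem sect_low' {κ ρ : ℝ} (h0 : 0 ≤ κ) (h1 : κ < 1) (hρ : 0 ≤ ρ) {η : ℂ} (h : η ∈ Sect κ ρ)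
    (s : ℝ) (hs : 0 ≤ s) : (1 - κ) / 2 * (‖η‖ + s) ≤ ‖η + s‖ := by
  have := sect_low h0 h1 (sect_anti h0 h1 hρ h) s hs
  simpa using this

theorem sect_slit {κ ρ : ℝ} (h0 : 0 ≤ κ) (h1 : κ < 1) (hρ : 0 ≤ ρ) : Sect κ ρ ⊆ slitPlane := by
  intro η h
  have h := sect_anti h0 h1 hρ h
  simp only [Sect, mem_ofPred_eq, ofReal_zero, sub_zero] at h
  rw [mem_slitPlane_iff]
  by_contra! hcon
  obtain ⟨hre, him⟩ := hcon
  have : ‖η‖ = -η.re := by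
    rw [show η = (η.re : ℂ) by apply Complex.ext <;> simp [him], Complex.norm_real,
      Real.norm_of_nonpos hre]
    simp
  rw [this] at h
  nlinarith

theorem sect_preconn {κ ρ : ℝ} (h0 : 0 ≤ κ) (h1 : κ < 1) : IsPreconnected (Sect κ ρ) := by
  have hmem : ((ρ + 1 : ℝ) : ℂ) ∈ Sect κ ρ := by
    simp [Sect]
    linarith
  have hs : StarConvex ℝ ((ρ + 1 : ℝ) : ℂ) (Sect κ ρ) := by
    intro η hη a b ha hb hab
    rcases hb.eq_or_lt with rfl | hb
    · have : a = 1 := by linarith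
      subst this
      simpa using hmem
    · have h2 : ((ρ:ℂ) + b • (η - ρ)) ∈ Sect κ ρ := by
        simp only [Sect, mem_ofPred_eq] at *
        rw [add_sub_cancel_left, norm_smul, Real.norm_of_nonneg hb.le]
        simp only [Complex.smul_re, smul_eq_mul]
        nlinarith
      have h3 := sect_shift h0 h1 h2 a ha
      have : a • ((ρ + 1 : ℝ) : ℂ) + b • η = (ρ:ℂ) + b • (η - ρ) + a := by
        simp only [Complex.real_smul]
        have : (a:ℂ) = 1 - b := by
          have : a = 1 - b := by linarith
          rw [this]; push_cast; ring
        rw [this]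
        push_cast
        ring
      rwa [this]
  exact (hs.isPathConnected hmem).isConnected.isPreconnected

theorem zmap_norm (θ : ℝ) {η : ℂ} (h : η ≠ 0) : ‖zmap θ η‖ = ‖η‖ ^ (2/5 : ℝ) := by
  unfold zmap
  rw [Complex.norm_exp, Real.rpow_def_of_pos (norm_pos_iff.2 h)]
  congr 1
  have : ((2/5:ℂ) * (log η + θ * I)) = ((2/5 : ℝ) : ℂ) * (log η + θ * I) := by push_cast; ring
  rw [this, Complex.re_ofReal_mul]
  simp [Complex.log_re]
  ring

theorem qpot_le (θ : ℝ) {η l : ℂ} {A : ℝ} (h : 1 ≤ ‖η‖) (hl : ‖l‖ ≤ A) :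
    ‖qpot θ η l‖ ≤ (A + 1) * ‖η‖ ^ (-(6/5) : ℝ) := by
  have hpos : 0 < ‖η‖ := by linarith
  have hη : η ≠ 0 := norm_pos_iff.1 hpos
  have h1 : ‖zmap θ η ^ 2 / η ^ 2‖ = ‖η‖ ^ (-(6/5) : ℝ) := by
    rw [norm_div, norm_pow, norm_pow, zmap_norm θ hη, ← Real.rpow_natCast, ← Real.rpow_mul hpos.le,
      ← Real.rpow_natCast, ← Real.rpow_sub hpos]
    norm_num
  have h2 : ‖1 / η ^ 2‖ ≤ ‖η‖ ^ (-(6/5) : ℝ) := by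
    rw [norm_div, norm_pow, norm_one, one_div, ← Real.rpow_natCast, ← Real.rpow_neg hpos.le]
    exact Real.rpow_le_rpow_of_exponent_le h (by norm_num)
  have h3 : qpot θ η l = (4/25) * (l * (zmap θ η ^ 2 / η ^ 2)) - (21/100) * (1 / η ^ 2) := by
    unfold qpot; ring
  rw [h3]
  refine (norm_sub_le _ _).trans ?_
  rw [norm_mul, norm_mul, norm_mul, h1]
  have h4 : ‖(4/25:ℂ)‖ = 4/25 := by norm_num
  have h5 : ‖(21/100:ℂ)‖ = 21/100 := by norm_num
  rw [h4, h5]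
  have h6 : 0 < ‖η‖ ^ (-(6/5) : ℝ) := by positivity
  have h7 : ‖l‖ * ‖η‖ ^ (-(6/5) : ℝ) ≤ A * ‖η‖ ^ (-(6/5) : ℝ) := by gcongr
  have h8 : 0 ≤ ‖l‖ * ‖η‖ ^ (-(6/5) : ℝ) := by positivity
  linarith

theorem sig_norm (θ : ℝ) : ‖sig θ‖ = 1 := Complex.norm_exp_ofReal_mul_I θ

theorem sig_re (θ : ℝ) : (sig θ).re = Real.cos θ := Complex.exp_ofReal_mul_I_re θ

theorem exists_vdata (θ : ℝ) (hθ : |θ| < Real.pi / 2) {κ : ℝ} (h0 : 0 ≤ κ) (h1 : κ < 1) {A : ℝ}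
    (hA : 0 < A) : ∃ ρ > (0:ℝ), ∃ M > 0, ∃ r,
      VData (Sect κ ρ) (Metric.ball 0 A) (qpot θ) M r (muc θ) := by
  set c := (1 - κ) / 2 with hc
  have hc0 : 0 < c := by rw [hc]; linarith
  set M := (A + 1) * c ^ (-(6/5) : ℝ) with hM
  have hM0 : 0 < M := by positivity
  have ht : Tendsto (fun r : ℝ => 25/2 * M * r ^ (-(1/5) : ℝ)) atTop (𝓝 0) := by
    simpa using (tendsto_rpow_neg_atTop (y := 1/5) (by norm_num)).const_mul (25/2 * M)
  obtain ⟨r, hr1, hr2⟩ := ((ht.eventually (gt_mem_nhds (show (0:ℝ) < 1/4 by norm_num))).and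
    (eventually_ge_atTop 1)).exists
  have hρ : 0 < r / c := by positivity
  have hnorm : ∀ η ∈ Sect κ (r / c), r ≤ ‖η‖ := by
    intro η hη
    have := sect_norm h0 h1 hρ.le hη
    rw [← hc] at this
    rwa [mul_div_cancel₀ _ hc0.ne'] at this
  refine ⟨r / c, hρ, M, hM0, r, ?_⟩
  refine ⟨sect_open _ _, Metric.isOpen_ball, fun η hη s hs => sect_shift h0 h1 hη s hs, ?_, ?_,
    by linarith, hnorm, hM0.le, ?_, ?_, ?_, hr1.le⟩
  · intro l _ η hη
    have hs := sect_slit h0 h1 hρ.le hη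
    have hz := (zmap_deriv θ hs).differentiableAt
    have hne : η ^ 2 ≠ 0 := pow_ne_zero _ (slitPlane_ne_zero hs)
    apply DifferentiableAt.differentiableWithinAt
    unfold qpot
    fun_prop (disch := assumption)
  · intro η _
    unfold qpot
    fun_prop
  · intro η hη s hs l hl
    have hs' := sect_shift h0 h1 hη s hs
    have h2 := qpot_le θ (hr2.trans (hnorm _ hs')) (mem_ball_zero_iff.1 hl).le
    refine h2.trans ?_
    have hnp : 0 < ‖η‖ := by linarith [hnorm η hη]
    have h3 := sect_low' h0 h1 hρ.le hη s hs
    rw [← hc] at h3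
    have h4 : ‖η + s‖ ^ (-(6/5) : ℝ) ≤ (c * (‖η‖ + s)) ^ (-(6/5) : ℝ) :=
      Real.rpow_le_rpow_of_nonpos (by positivity) h3 (by norm_num)
    rw [Real.mul_rpow hc0.le (by positivity)] at h4
    rw [hM, mul_assoc]
    gcongr
  · unfold muc
    have : ((4/5:ℂ) * sig θ).re = 4/5 * Real.cos θ := by
      have : (4/5:ℂ) = ((4/5:ℝ):ℂ) := by push_cast; ring
      rw [this, Complex.re_ofReal_mul, sig_re]
    rw [this]
    have := Real.cos_pos_of_mem_Ioo (x := θ) ⟨by linarith [(abs_lt.1 hθ).1], (abs_lt.1 hθ).2⟩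
    positivity
  · unfold muc
    rw [norm_mul, sig_norm]
    norm_num

/-- The reference solution for `θ = 0`. -/
noncomputable def u0 (η l : ℂ) : ℂ := usol (qpot 0) (muc 0) η l

theorem usol_hasDeriv {Ω B : Set ℂ} {q : ℂ → ℂ → ℂ} {M r : ℝ} {μ : ℂ} (D : VData Ω B q M r μ)
    {η l : ℂ} (hη : η ∈ Ω) (hl : l ∈ B) :
    HasDerivAt (fun η => usol q μ η l) (deriv (fun η => usol q μ η l) η) η :=
  ((D.good_usol.dη l hl).differentiableAt (D.openΩ.mem_nhds hη)).hasDerivAt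

theorem real_mem_sect {ρ x : ℝ} {κ : ℝ} (h0 : 0 ≤ κ) (hx : ρ < x) : (x:ℂ) ∈ Sect κ ρ := by
  simp only [Sect, mem_ofPred_eq]
  rw [← Complex.ofReal_sub, Complex.norm_real, Real.norm_of_nonneg (by linarith), Complex.ofReal_re]
  nlinarith

theorem ivp1_comb (c₁ c₂ z l : ℂ) : ivp1 z (comb c₁ c₂ z l) (comb' c₁ c₂ z l) l = c₁ := by
  unfold ivp1 comb comb'
  linear_combination c₁ * wronsk z l

theorem ivp2_comb (c₁ c₂ z l : ℂ) : ivp2 z (comb c₁ c₂ z l) (comb' c₁ c₂ z l) l = c₂ := by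
  unfold ivp2 comb comb'
  linear_combination c₂ * wronsk z l

theorem Utr_comb_deriv (c₁ c₂ l : ℂ) (θ : ℝ) {η : ℂ} (h : η ∈ slitPlane) :
    HasDerivAt (Utr (fun z => comb c₁ c₂ z l) θ)
      (Utr' (fun z => comb c₁ c₂ z l) (fun z => comb' c₁ c₂ z l) θ η) η :=
  Utr_deriv (fun z => comb_deriv c₁ c₂ z l) θ h

theorem Utr'_comb_deriv (c₁ c₂ l : ℂ) (θ : ℝ) {η : ℂ} (h : η ∈ slitPlane) :
    HasDerivAt (Utr' (fun z => comb c₁ c₂ z l) (fun z => comb' c₁ c₂ z l) θ)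
      (muc θ * Utr' (fun z => comb c₁ c₂ z l) (fun z => comb' c₁ c₂ z l) θ η +
        qpot θ η l * Utr (fun z => comb c₁ c₂ z l) θ η) η :=
  Utr'_deriv (fun z => comb_deriv c₁ c₂ z l) (fun z => comb'_deriv c₁ c₂ z l) θ h

/-- Property characterising the coefficients. -/
def Match (c₁ c₂ l : ℂ) (ρ : ℝ) : Prop :=
  0 < ρ ∧ ∀ η ∈ Sect (1/2) ρ, Utr (fun z => comb c₁ c₂ z l) 0 η = u0 η l

theorem Match.deriv {c₁ c₂ l : ℂ} {ρ : ℝ} (h : Match c₁ c₂ l ρ) {η : ℂ} (hη : η ∈ Sect (1/2) ρ) :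
    Utr' (fun z => comb c₁ c₂ z l) (fun z => comb' c₁ c₂ z l) 0 η = deriv (fun η => u0 η l) η := by
  have h1 := Utr_comb_deriv c₁ c₂ l 0 (sect_slit (by norm_num) (by norm_num) h.1.le hη)
  have h2 : (fun η => u0 η l) =ᶠ[𝓝 η] Utr (fun z => comb c₁ c₂ z l) 0 := by
    filter_upwards [(sect_open _ _).mem_nhds hη] with w hw using (h.2 w hw).symm
  exact (h1.congr_of_eventuallyEq h2).deriv.symm

theorem pe_ne (θ : ℝ) (η : ℂ) : pfac θ η * emap θ η ≠ 0 :=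
  mul_ne_zero (Complex.exp_ne_zero _) (Complex.exp_ne_zero _)

theorem zmap_ne (θ : ℝ) (η : ℂ) : zmap θ η ≠ 0 := Complex.exp_ne_zero _

theorem Match.unique {c₁ c₂ d₁ d₂ l : ℂ} {ρ ρ' : ℝ} (h : Match c₁ c₂ l ρ) (h' : Match d₁ d₂ l ρ') :
    c₁ = d₁ ∧ c₂ = d₂ := by
  set x : ℝ := max ρ ρ' + 1 with hx
  have hm : (x:ℂ) ∈ Sect (1/2) ρ := real_mem_sect (by norm_num) (by rw [hx]; linarith [le_max_left ρ ρ'])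
  have hm' : (x:ℂ) ∈ Sect (1/2) ρ' := real_mem_sect (by norm_num) (by rw [hx]; linarith [le_max_right ρ ρ'])
  have hxne : (x:ℂ) ≠ 0 := slitPlane_ne_zero (sect_slit (by norm_num) (by norm_num) h.1.le hm)
  have e1 := (h.2 _ hm).trans (h'.2 _ hm').symm
  have e2 := (h.deriv hm).trans (h'.deriv hm').symm
  simp only [Utr, mul_assoc] at e1
  have e1 := mul_right_cancel₀ (pe_ne 0 x) e1
  simp only [Utr'] at e2
  have e2 := mul_left_cancel₀ (pe_ne 0 x) e2
  rw [e1] at e2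
  have e2 := add_right_cancel e2
  have e2 := mul_right_cancel₀ (div_ne_zero (mul_ne_zero (by norm_num) (zmap_ne 0 x)) hxne) e2
  constructor
  · rw [← ivp1_comb c₁ c₂ (zmap 0 x) l, e1, e2, ivp1_comb]
  · rw [← ivp2_comb c₁ c₂ (zmap 0 x) l, e1, e2, ivp2_comb]

theorem exists_coeffs {A : ℝ} (hA : 0 < A) : ∃ C₁ C₂ : ℂ → ℂ, ∃ ρ : ℝ,
    DifferentiableOn ℂ C₁ (Metric.ball 0 A) ∧ DifferentiableOn ℂ C₂ (Metric.ball 0 A) ∧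
    ∀ l ∈ Metric.ball (0:ℂ) A, Match (C₁ l) (C₂ l) l ρ := by
  obtain ⟨ρ, hρ, M, hM, r, D⟩ := exists_vdata 0 (by simp; positivity) (κ := 1/2) (by norm_num)
    (by norm_num) hA
  set x : ℂ := ((ρ + 1 : ℝ) : ℂ) with hx
  have hxm : x ∈ Sect (1/2) ρ := real_mem_sect (by norm_num) (by linarith)
  have hsl : Sect (1/2) ρ ⊆ slitPlane := sect_slit (by norm_num) (by norm_num) hρ.le
  have hxne : x ≠ 0 := slitPlane_ne_zero (hsl hxm)
  set z := zmap 0 x with hz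
  have hzne : z ≠ 0 := zmap_ne _ _
  set p := pfac 0 x * emap 0 x with hp
  have hpne : p ≠ 0 := pe_ne _ _
  set g : ℂ → ℂ := fun l => u0 x l / p with hg
  set h : ℂ → ℂ := fun l => (deriv (fun η => u0 η l) x / p - g l * (3/10 / x + 2/5 * sig 0)) /
    (2/5 * z / x) with hh
  have dg : DifferentiableOn ℂ g (Metric.ball 0 A) := (D.good_usol.dl x hxm).div_const _
  have dh : DifferentiableOn ℂ h (Metric.ball 0 A) :=
    (((D.usol_deriv_dl hxm).div_const _).sub (dg.mul_const _)).div_const _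
  have hs : ∀ a : ℕ → ℂ → ℂ, EntF a → DifferentiableOn ℂ (fun l => ser a z l) (Metric.ball 0 A) :=
    fun a ha => (ha.ser_dl z).differentiableOn
  refine ⟨fun l => ivp1 z (g l) (h l) l, fun l => ivp2 z (g l) (h l) l, ρ, ?_, ?_, ?_⟩
  · exact (dg.mul (hs _ (coef_ent 0 1).dco)).sub (dh.mul (hs _ (coef_ent 0 1)))
  · exact (dh.mul (hs _ (coef_ent 1 0))).sub (dg.mul (hs _ (coef_ent 1 0).dco))
  · intro l hl
    refine ⟨hρ, ?_⟩
    set c₁ := ivp1 z (g l) (h l) l with hc₁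
    set c₂ := ivp2 z (g l) (h l) l with hc₂
    have v1 : comb c₁ c₂ z l = g l := ivp_val _ _ _ _
    have v2 : comb' c₁ c₂ z l = h l := ivp_der _ _ _ _
    have w1 : Utr (fun z => comb c₁ c₂ z l) 0 x = u0 x l := by
      simp only [Utr, mul_assoc]
      rw [← hz, ← hp, v1]
      simp only [hg]
      field_simp
    have w2 : Utr' (fun z => comb c₁ c₂ z l) (fun z => comb' c₁ c₂ z l) 0 x =
        deriv (fun η => u0 η l) x := by
      simp only [Utr']
      rw [← hz, ← hp, v1, v2]
      simp only [hh]
      rw [div_mul_cancel₀ _ (div_ne_zero (mul_ne_zero (by norm_num) hzne) hxne), sub_add_cancel,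
        mul_div_cancel₀ _ hpne]
    have hu : ∀ η ∈ Sect (1/2) ρ, HasDerivAt (fun η => u0 η l) (deriv (fun η => u0 η l) η) η :=
      fun η hη => usol_hasDeriv D hη hl
    have hU := fun η (hη : η ∈ Sect (1/2) ρ) => Utr_comb_deriv c₁ c₂ l 0 (hsl hη)
    obtain ⟨K, hK⟩ := wronsk_unique (sect_open _ _) (sect_preconn (by norm_num) (by norm_num))
      (q := fun η => qpot 0 η l) hu (fun η hη => D.usol_ode hη hl) hU
      (fun η hη => Utr'_comb_deriv c₁ c₂ l 0 (hsl hη))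
    have hK0 : K = 0 := by
      have := hK x hxm
      rw [w1, w2] at this
      have h0 : K * exp (muc 0 * x) = 0 := by rw [← this]; ring
      exact (mul_eq_zero.1 h0).resolve_right (Complex.exp_ne_zero _)
    obtain ⟨c, hc⟩ := const_ratio (sect_open _ _) (sect_preconn (by norm_num) (by norm_num))
      hu hU (fun η hη => D.usol_ne hη hl) (fun η hη => by rw [hK η hη, hK0, zero_mul])
    have hc1 : c = 1 := by
      have := hc x hxm
      rw [w1] at this
      have h0 : u0 x l ≠ 0 := D.usol_ne hxm hl
      exact (mul_right_cancel₀ h0 (by rw [← this, one_mul])).symm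
    intro η hη
    rw [hc η hη, hc1, one_mul]

theorem VData.tendsto_one {Ω B : Set ℂ} {q : ℂ → ℂ → ℂ} {M r : ℝ} {μ : ℂ} (D : VData Ω B q M r μ)
    {l : ℂ} (hl : l ∈ B) {s : ℝ → ℂ} (hs : ∀ᶠ x in atTop, s x ∈ Ω)
    (hn : Tendsto (fun x => ‖s x‖) atTop atTop) :
    Tendsto (fun x => usol q μ (s x) l) atTop (𝓝 1) := by
  rw [tendsto_iff_norm_sub_tendsto_zero]
  have h1 : Tendsto (fun x => 25 * M * ‖s x‖ ^ (-(1/5) : ℝ)) atTop (𝓝 (25 * M * 0)) :=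
    ((tendsto_rpow_neg_atTop (y := 1/5) (by norm_num)).comp hn).const_mul _
  rw [mul_zero] at h1
  refine squeeze_zero' (Eventually.of_forall fun x => norm_nonneg _) ?_ h1
  filter_upwards [hs] with x hx using D.usol_asymp hx hl

theorem VData.deriv_bd {Ω B : Set ℂ} {q : ℂ → ℂ → ℂ} {M r : ℝ} {μ : ℂ} (D : VData Ω B q M r μ)
    {η l : ℂ} (hη : η ∈ Ω) (hl : l ∈ B) : ‖deriv (fun η => usol q μ η l) η‖ ≤ 1/5 := by
  refine (D.usol_deriv_le hη hl).trans ?_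
  have h1 := D.pow_le hη
  have h2 := D.small
  have h3 := D.Mpos
  have : M * ‖η‖ ^ (-(1/5) : ℝ) ≤ M * r ^ (-(1/5) : ℝ) := by gcongr
  linarith

theorem log_sig_mul {θ : ℝ} (hθ : |θ| < Real.pi / 2) {x : ℝ} (hx : 0 < x) :
    log (sig θ * x) = log (x:ℂ) + θ * I := by
  have hpi := Real.pi_pos
  obtain ⟨h1, h2⟩ := abs_lt.1 hθ
  rw [Complex.log_mul_ofReal x hx _ (by exact Complex.exp_ne_zero _)]
  rw [sig, Complex.log_exp (by simp; linarith) (by simp; linarith), Complex.ofReal_log hx.le]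

theorem Utr_rot {θ : ℝ} (hθ : |θ| < Real.pi / 2) {x : ℝ} (hx : 0 < x) (f : ℂ → ℂ) :
    Utr f θ x = Utr f 0 (sig θ * x) := by
  have h := log_sig_mul hθ hx
  simp only [Utr, zmap, pfac, emap, h]
  simp [sig, mul_assoc]

theorem Utr'_rot {θ : ℝ} (hθ : |θ| < Real.pi / 2) {x : ℝ} (hx : 0 < x) (f f' : ℂ → ℂ) :
    Utr' f f' θ x = sig θ * Utr' f f' 0 (sig θ * x) := by
  have h := log_sig_mul hθ hx
  have hs : sig θ ≠ 0 := Complex.exp_ne_zero _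
  have hxc : (x:ℂ) ≠ 0 := by exact_mod_cast hx.ne'
  have e1 : zmap 0 (sig θ * x) = zmap θ x := by simp [zmap, h]
  have e2 : pfac 0 (sig θ * x) = pfac θ x := by simp [pfac, h]
  have e0 : sig 0 = 1 := by simp [sig]
  have e3 : emap 0 (sig θ * x) = emap θ x := by simp [emap, e0, mul_assoc]
  simp only [Utr', e1, e2, e3, e0]
  field_simp

theorem match_rot {c₁ c₂ l : ℂ} {ρ0 : ℝ} (h : Match c₁ c₂ l ρ0) {A : ℝ} (hA : 0 < A)
    (hl : l ∈ Metric.ball (0:ℂ) A) {θ : ℝ} (hθ : |θ| < Real.pi / 2) {κ ρ M r : ℝ} (h0 : 0 ≤ κ)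
    (h1 : κ < 1) (hρ : 0 < ρ) (D : VData (Sect κ ρ) (Metric.ball 0 A) (qpot θ) M r (muc θ)) {η : ℂ}
    (hη : η ∈ Sect κ ρ) :
    Utr (fun z => comb c₁ c₂ z l) θ η = usol (qpot θ) (muc θ) η l := by
  obtain ⟨ρ1, hρ1, M1, hM1, r1, D1⟩ := exists_vdata 0 (by simp; positivity) (κ := 1/2) (by norm_num)
    (by norm_num) hA
  have hcos : 0 < Real.cos θ :=
    Real.cos_pos_of_mem_Ioo (x := θ) ⟨by linarith [(abs_lt.1 hθ).1], (abs_lt.1 hθ).2⟩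
  have hmem : ∀ ρ' : ℝ, ∀ᶠ x : ℝ in atTop, sig θ * x ∈ Sect (1/2) ρ' := by
    intro ρ'
    have ht : Tendsto (fun x : ℝ => Real.cos θ * x) atTop atTop :=
      tendsto_id.const_mul_atTop hcos
    filter_upwards [ht.eventually_gt_atTop ρ'] with x hx
    simp only [Sect, mem_ofPred_eq, sub_re, re_mul_ofReal, sig_re, ofReal_re]
    have := norm_nonneg (sig θ * x - ρ')
    nlinarith
  have hn : Tendsto (fun x : ℝ => ‖sig θ * x‖) atTop atTop := by
    simp only [norm_mul, sig_norm, one_mul, Complex.norm_real]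
    exact tendsto_norm_atTop_atTop
  have hn' : Tendsto (fun x : ℝ => ‖(x:ℂ)‖) atTop atTop := by
    simp only [Complex.norm_real]
    exact tendsto_norm_atTop_atTop
  have hr : ∀ᶠ x : ℝ in atTop, (x:ℂ) ∈ Sect κ ρ := by
    filter_upwards [eventually_gt_atTop ρ] with x hx using real_mem_sect h0 hx
  have hsl : Sect κ ρ ⊆ slitPlane := sect_slit h0 h1 hρ.le
  have hu : ∀ η ∈ Sect κ ρ, HasDerivAt (fun η => usol (qpot θ) (muc θ) η l)
      (deriv (fun η => usol (qpot θ) (muc θ) η l) η) η := fun η hη => usol_hasDeriv D hη hl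
  have hU := fun η (hη : η ∈ Sect κ ρ) => Utr_comb_deriv c₁ c₂ l θ (hsl hη)
  obtain ⟨K, hK⟩ := wronsk_unique (sect_open _ _) (sect_preconn h0 h1)
      (q := fun η => qpot θ η l) hu (fun η hη => D.usol_ode hη hl) hU
      (fun η hη => Utr'_comb_deriv c₁ c₂ l θ (hsl hη))
  have hK0 : K = 0 := by
    by_contra hKne
    have hKp : 0 < ‖K‖ := norm_pos_iff.2 hKne
    have ht : Tendsto (fun x : ℝ => ‖K‖ * Real.exp ((muc θ).re * x)) atTop atTop :=
      (Real.tendsto_exp_atTop.comp (tendsto_id.const_mul_atTop D.μre)).const_mul_atTop hKp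
    obtain ⟨x, hx1, hx2, hx3, hx4, hx5⟩ := ((ht.eventually_gt_atTop 1).and (hr.and
      ((hmem ρ0).and ((hmem ρ1).and (eventually_gt_atTop 0))))).exists
    have e := congrArg norm (hK x hx2)
    rw [norm_mul, Complex.norm_exp, re_mul_ofReal, Utr_rot hθ hx5, Utr'_rot hθ hx5, h.2 _ hx3,
      h.deriv hx3] at e
    have b1 := D.good_usol.bd _ hx2 l hl
    have b2 := D.deriv_bd hx2 hl
    have b3 := D1.good_usol.bd _ hx4 l hl
    have b4 := D1.deriv_bd hx4 hl
    rw [← e] at hx1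
    have := norm_sub_le (usol (qpot θ) (muc θ) x l * (sig θ * deriv (fun η => u0 η l) (sig θ * x)))
      (deriv (fun η => usol (qpot θ) (muc θ) η l) x * u0 (sig θ * x) l)
    rw [norm_mul, norm_mul, norm_mul, sig_norm, one_mul] at this
    have c1 : ‖usol (qpot θ) (muc θ) x l‖ * ‖deriv (fun η => u0 η l) (sig θ * x)‖ ≤ 2 * (1/5) :=
      mul_le_mul b1 b4 (norm_nonneg _) (by norm_num)
    have c2 : ‖deriv (fun η => usol (qpot θ) (muc θ) η l) x‖ * ‖u0 (sig θ * x) l‖ ≤ (1/5) * 2 :=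
      mul_le_mul b2 b3 (norm_nonneg _) (by norm_num)
    linarith
  obtain ⟨c, hc⟩ := const_ratio (sect_open _ _) (sect_preconn h0 h1)
      hu hU (fun η hη => D.usol_ne hη hl) (fun η hη => by rw [hK η hη, hK0, zero_mul])
  have hc1 : c = 1 := by
    have t1 : Tendsto (fun x : ℝ => u0 (sig θ * x) l) atTop (𝓝 1) := D1.tendsto_one hl (hmem ρ1) hn
    have t2 : Tendsto (fun x : ℝ => usol (qpot θ) (muc θ) (x:ℂ) l) atTop (𝓝 1) :=
      D.tendsto_one hl hr hn'
    have t3 := t2.const_mul c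
    have : (fun x : ℝ => c * usol (qpot θ) (muc θ) (x:ℂ) l) =ᶠ[atTop] fun x : ℝ => u0 (sig θ * x) l := by
      filter_upwards [hr, hmem ρ0, eventually_gt_atTop 0] with x hx2 hx3 hx5
      rw [← hc x hx2, Utr_rot hθ hx5, h.2 _ hx3]
    have := tendsto_nhds_unique (t3.congr' this) t1
    rwa [mul_one] at this
  rw [hc η hη, hc1, one_mul]

theorem sector_asymp {θ d A : ℝ} (hA : 0 < A) (hθ : |θ| < Real.pi / 2) (hd : 0 < d)
    (hd' : d < Real.pi / 2) : ∃ C > (0:ℝ), ∃ R > (0:ℝ), ∀ l ∈ Metric.ball (0:ℂ) A, ∀ c₁ c₂ : ℂ,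
    ∀ ρ0 : ℝ, Match c₁ c₂ l ρ0 → ∀ z : ℂ, R ≤ ‖z‖ → |5/2 * Complex.arg z - θ| ≤ Real.pi - d →
    ‖comb c₁ c₂ z l * z ^ ((3 : ℂ) / 4) * Complex.exp ((2 / 5 : ℂ) * z ^ ((5 : ℂ) / 2)) - 1‖
      ≤ C * ‖z‖ ^ (-(1 / 2) : ℝ) := by
  have hk0 : 0 < Real.cos d := Real.cos_pos_of_mem_Ioo ⟨by linarith, hd'⟩
  have hk1 : Real.cos d < 1 := by
    have := Real.cos_lt_cos_of_nonneg_of_le_pi le_rfl (by linarith) hd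
    rwa [Real.cos_zero] at this
  set k := Real.cos d with hk
  set κ := (1 + k) / 2 with hκ
  have h0 : 0 ≤ κ := by rw [hκ]; linarith
  have h1 : κ < 1 := by rw [hκ]; linarith
  obtain ⟨ρ, hρ, M, hM, r, D⟩ := exists_vdata θ hθ h0 h1 hA
  have hT : Tendsto (fun x : ℝ => x ^ (5/2 : ℝ)) atTop atTop := tendsto_rpow_atTop (by norm_num)
  obtain ⟨R0, hR0⟩ := eventually_atTop.1 (hT.eventually_gt_atTop (2 * ρ / (κ - k)))
  refine ⟨25 * M, by positivity, max R0 1, by positivity, ?_⟩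
  intro l hl c₁ c₂ ρ0 hm z hz harg
  have hzp : 0 < ‖z‖ := lt_of_lt_of_le one_pos ((le_max_right _ _).trans hz)
  have hzne : z ≠ 0 := norm_pos_iff.1 hzp
  have hR := hR0 ‖z‖ ((le_max_left _ _).trans hz)
  obtain ⟨ha1, ha2⟩ := abs_le.1 harg
  set w : ℂ := (5/2) * log z - θ * I with hw
  have hwim : w.im = 5/2 * Complex.arg z - θ := by
    have : w = ((5/2 : ℝ) : ℂ) * log z - θ * I := by rw [hw]; push_cast; ring
    rw [this, sub_im, im_ofReal_mul, log_im]; simp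
  have hwre : w.re = 5/2 * Real.log ‖z‖ := by
    have : w = ((5/2 : ℝ) : ℂ) * log z - θ * I := by rw [hw]; push_cast; ring
    rw [this, sub_re, re_ofReal_mul, log_re]; simp
  have hlog : log (exp w) = w := Complex.log_exp (by rw [hwim]; linarith) (by rw [hwim]; linarith)
  have hnorm : ‖exp w‖ = ‖z‖ ^ (5/2 : ℝ) := by
    rw [Complex.norm_exp, hwre, Real.rpow_def_of_pos hzp, mul_comm]
  have ez : zmap θ (exp w) = z := by
    rw [zmap, hlog, hw]
    rw [show (2/5 : ℂ) * (5/2 * log z - θ * I + θ * I) = log z by ring, Complex.exp_log hzne]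
  have ep : pfac θ (exp w) = z ^ ((3 : ℂ) / 4) := by
    rw [pfac, hlog, hw, Complex.cpow_def_of_ne_zero hzne]
    congr 1; ring
  have ee : emap θ (exp w) = Complex.exp ((2 / 5 : ℂ) * z ^ ((5 : ℂ) / 2)) := by
    rw [emap, sig, Complex.cpow_def_of_ne_zero hzne, mul_assoc, ← Complex.exp_add]
    congr 3; rw [hw]; ring
  have hre : -k * ‖exp w‖ ≤ (exp w).re := by
    have hcosge : -k ≤ Real.cos w.im := by
      rw [hk, ← Real.cos_pi_sub, ← Real.cos_abs w.im, hwim]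
      exact Real.cos_le_cos_of_nonneg_of_le_pi (abs_nonneg _) (by linarith) harg
    rw [Complex.exp_re, Complex.norm_exp]
    have := Real.exp_pos w.re
    nlinarith
  have hmem : exp w ∈ Sect κ ρ := by
    simp only [Sect, mem_ofPred_eq, sub_re, ofReal_re]
    have hκk : 0 < κ - k := by rw [hκ]; linarith
    rw [div_lt_iff₀ hκk, ← hnorm] at hR
    have t : ‖exp w‖ - ρ ≤ ‖exp w - ρ‖ := by
      have := norm_sub_norm_le (exp w) (ρ:ℂ)
      rwa [Complex.norm_real, Real.norm_of_nonneg hρ.le] at this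
    nlinarith
  have hfin := D.usol_asymp hmem hl
  rw [← match_rot hm hA hl hθ h0 h1 hρ D hmem] at hfin
  simp only [Utr, ez, ep, ee] at hfin
  rw [hnorm, ← Real.rpow_mul hzp.le] at hfin
  norm_num at hfin ⊢
  exact hfin

theorem exists_match (l : ℂ) : ∃ c₁ c₂ : ℂ, ∃ ρ : ℝ, Match c₁ c₂ l ρ := by
  obtain ⟨C₁, C₂, ρ, -, -, h⟩ := exists_coeffs (A := ‖l‖ + 1) (by positivity)
  exact ⟨C₁ l, C₂ l, ρ, h l (by simp)⟩

theorem exists_family : ∃ c₁ c₂ : ℂ → ℂ, ∃ ρ : ℂ → ℝ, (∀ l, Match (c₁ l) (c₂ l) l (ρ l)) ∧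
    Differentiable ℂ c₁ ∧ Differentiable ℂ c₂ := by
  choose c₁ c₂ ρ h using exists_match
  have key : ∀ l, DifferentiableAt ℂ c₁ l ∧ DifferentiableAt ℂ c₂ l := by
    intro l
    obtain ⟨C₁, C₂, ρ', d1, d2, h'⟩ := exists_coeffs (A := ‖l‖ + 1) (by positivity)
    have hm : Metric.ball (0:ℂ) (‖l‖ + 1) ∈ 𝓝 l := Metric.isOpen_ball.mem_nhds (by simp)
    constructor
    · refine (d1.differentiableAt hm).congr_of_eventuallyEq ?_
      filter_upwards [hm] with x hx using ((h x).unique (h' x hx)).1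
    · refine (d2.differentiableAt hm).congr_of_eventuallyEq ?_
      filter_upwards [hm] with x hx using ((h x).unique (h' x hx)).2
  exact ⟨c₁, c₂, ρ, h, fun l => (key l).1, fun l => (key l).2⟩

theorem two_sectors {ε A : ℝ} (hε : 0 < ε) (hA : 0 < A) : ∃ C > (0:ℝ), ∃ R > (0:ℝ),
    ∀ l ∈ Metric.ball (0:ℂ) A, ∀ c₁ c₂ : ℂ, ∀ ρ0 : ℝ, Match c₁ c₂ l ρ0 → ∀ z : ℂ, R ≤ ‖z‖ →
    |Complex.arg z| ≤ 3 * Real.pi / 5 - ε →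
    ‖comb c₁ c₂ z l * z ^ ((3 : ℂ) / 4) * Complex.exp ((2 / 5 : ℂ) * z ^ ((5 : ℂ) / 2)) - 1‖
      ≤ C * ‖z‖ ^ (-(1 / 2) : ℝ) := by
  have hpi := Real.pi_gt_three
  set e := min ε (1/10) with he
  have he0 : 0 < e := lt_min hε (by norm_num)
  have he1 : e ≤ ε := min_le_left _ _
  have he2 : e ≤ 1/10 := min_le_right _ _
  obtain ⟨C, hC, R, hR, h⟩ := sector_asymp (θ := Real.pi/2 - 5/4*e) (d := 5/4*e) hA
    (by rw [abs_lt]; constructor <;> linarith) (by linarith) (by linarith)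
  obtain ⟨C', hC', R', hR', h'⟩ := sector_asymp (θ := -(Real.pi/2 - 5/4*e)) (d := 5/4*e) hA
    (by rw [abs_lt]; constructor <;> linarith) (by linarith) (by linarith)
  refine ⟨max C C', lt_max_of_lt_left hC, max R R', lt_max_of_lt_left hR, ?_⟩
  intro l hl c₁ c₂ ρ0 hm z hz harg
  obtain ⟨a1, a2⟩ := abs_le.1 harg
  have hp : 0 ≤ ‖z‖ ^ (-(1 / 2) : ℝ) := by positivity
  rcases le_total 0 (Complex.arg z) with hs | hs
  · refine (h l hl c₁ c₂ ρ0 hm z ((le_max_left _ _).trans hz) ?_).trans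
      (mul_le_mul_of_nonneg_right (le_max_left _ _) hp)
    rw [abs_le]; constructor <;> linarith
  · refine (h' l hl c₁ c₂ ρ0 hm z ((le_max_right _ _).trans hz) ?_).trans
      (mul_le_mul_of_nonneg_right (le_max_right _ _) hp)
    rw [abs_le]; constructor <;> linarith

end StdFam


open Complex

/-- There exists a standard solution family for `f'' = (z³ + λ) f`:
entire in `z` and `λ`, with the Liouville–Green asymptotics
`f(z,λ) = z^{-3/4} e^{-(2/5) z^{5/2}} (1 + O(z^{-1/2}))` in the sector
`|arg z| ≤ 3π/5 - ε`, uniformly for `λ` in compact sets. -/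
theorem exists_standard_solution_family :
    ∃ f : ℂ → ℂ → ℂ,
      (∀ lam : ℂ, Differentiable ℂ (fun z => f z lam) ∧
        ∀ z : ℂ, deriv (deriv (fun w => f w lam)) z = (z ^ 3 + lam) * f z lam) ∧
      (∀ z : ℂ, Differentiable ℂ (fun lam => f z lam)) ∧
      (∀ ε > (0 : ℝ), ∀ L : Set ℂ, IsCompact L →
        ∃ C > (0 : ℝ), ∃ R > (0 : ℝ), ∀ lam ∈ L, ∀ z : ℂ,
          R ≤ ‖z‖ → |Complex.arg z| ≤ 3 * Real.pi / 5 - ε →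
          ‖f z lam * z ^ ((3 : ℂ) / 4) *
              Complex.exp ((2 / 5 : ℂ) * z ^ ((5 : ℂ) / 2)) - 1‖
            ≤ C * ‖z‖ ^ (-(1 / 2) : ℝ)) := by
  obtain ⟨c₁, c₂, ρ, hm, d1, d2⟩ := StdFam.exists_family
  refine ⟨fun z l => StdFam.comb (c₁ l) (c₂ l) z l, ?_, ?_, ?_⟩
  · intro l
    refine ⟨fun z => (StdFam.comb_deriv (c₁ l) (c₂ l) z l).differentiableAt, fun z => ?_⟩
    have : deriv (fun w => StdFam.comb (c₁ l) (c₂ l) w l) = fun w => StdFam.comb' (c₁ l) (c₂ l) w l :=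
      funext fun w => (StdFam.comb_deriv (c₁ l) (c₂ l) w l).deriv
    rw [this]
    exact (StdFam.comb'_deriv (c₁ l) (c₂ l) z l).deriv
  · intro z
    exact (d1.mul ((StdFam.coef_ent 1 0).ser_dl z)).add (d2.mul ((StdFam.coef_ent 0 1).ser_dl z))
  · intro ε hε L hL
    obtain ⟨A, hA, hLA⟩ := hL.isBounded.subset_ball_lt 0 0
    obtain ⟨C, hC, R, hR, h⟩ := StdFam.two_sectors hε hA
    exact ⟨C, hC, R, hR, fun l hl z hz ha => h l (hLA hl) _ _ _ (hm l) z hz ha⟩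
end
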